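/- Let k ≥ 2 be an integer and (p_n)_{n∈ℕ} an arbitrary sequence of variable words over k. Then for every set A of words over k satisfying limsup_{n→∞} |A ∩ [k]^n| / k^n > 0 there exist a word c over k and a sequence (w_n)_{n∈ℕ} of variable words over k of pattern (p_n) such that the set {c} ∪ {c⌢w_0(a_0)⌢···⌢w_n(a_n) : n ∈ ℕ and a_0,…,a_n ∈ [k]} is contained in A. -/

import Mathlib

/-- A word over `k`: a finite sequence with values in `[k]`. -/
abbrev Word (k : ℕ) := List (Fin k)

/-- A "possibly variable" letter sequence: `none` plays the role of the variable `v`. -/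
abbrev VWord (k : ℕ) := List (Option (Fin k))

/-- Substitution of the letter `a` for every occurrence of the variable. -/
def subst {k : ℕ} (w : VWord k) (a : Fin k) : Word k := w.map (fun o => o.getD a)

/-- `w` is a variable word: the variable `v` occurs in it. -/
def IsVar {k : ℕ} (w : VWord k) : Prop := none ∈ w

/-- The word `c ⌢ w₀(a₀) ⌢ ⋯ ⌢ wₙ(aₙ)`. -/
def csWord {k : ℕ} (c : Word k) (ws : ℕ → VWord k) (n : ℕ) (a : ℕ → Fin k) : Word k :=
  c ++ ((List.range (n + 1)).map fun i => subst (ws i) (a i)).flatten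

/-- The set `{c} ∪ {c ⌢ w₀(a₀) ⌢ ⋯ ⌢ wₙ(aₙ) : n ∈ ℕ, a₀,…,aₙ ∈ [k]}`. -/
def csSetInf {k : ℕ} (c : Word k) (ws : ℕ → VWord k) : Set (Word k) :=
  insert c {x | ∃ n : ℕ, ∃ a : ℕ → Fin k, x = csWord c ws n a}

/-- The density `|A ∩ [k]^n| / k^n`. -/
noncomputable def dens (k n : ℕ) (A : Set (Word k)) : ℝ :=
  (Set.ncard {x ∈ A | x.length = n} : ℝ) / (k : ℝ) ^ n


namespace DCS

/-- substitution -/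
def sb {α : Type} (w : List (Option α)) (a : α) : List α := w.map (fun o => o.getD a)

@[simp] lemma sb_nil {α : Type} (a : α) : sb [] a = [] := rfl
@[simp] lemma sb_append {α : Type} (u w : List (Option α)) (a : α) :
    sb (u ++ w) a = sb u a ++ sb w a := by simp [sb]
@[simp] lemma sb_map_some {α : Type} (c : List α) (a : α) : sb (c.map some) a = c := by
  simp [sb, Function.comp_def]
@[simp] lemma sb_cons_none {α : Type} (w : List (Option α)) (a : α) :
    sb (none :: w) a = a :: sb w a := rfl
@[simp] lemma sb_cons_some {α : Type} (b : α) (w : List (Option α)) (a : α) :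
    sb (some b :: w) a = b :: sb w a := rfl
@[simp] lemma length_sb {α : Type} (w : List (Option α)) (a : α) : (sb w a).length = w.length := by
  simp [sb]

/-- Carlson–Simpson maps of dimension `d` with values of length at most `R`. -/
def CS {α : Type} (d R : ℕ) (f : List α → List α) : Prop :=
  (∀ j < d, ∃ w : List (Option α), ∀ t : List α, t.length = j → ∀ a : α,
    f (t ++ [a]) = f t ++ a :: sb w a) ∧ ∀ t, t.length ≤ d → (f t).length ≤ R

lemma CS.bd {α : Type} {d R : ℕ} {f : List α → List α} (h : CS d R f) (t : List α)
    (ht : t.length ≤ d) : (f t).length ≤ R := h.2 t ht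

lemma CS.mono {α : Type} {d d' R R' : ℕ} {f : List α → List α} (h : CS d R f) (hd : d' ≤ d)
    (hR : R ≤ R') : CS d' R' f :=
  ⟨fun j hj => h.1 j (by omega), fun t ht => (h.2 t (by omega)).trans hR⟩

lemma CS_id {α : Type} (d : ℕ) : CS d d (fun t : List α => t) :=
  ⟨fun j _ => ⟨[], fun t _ a => by simp⟩, fun t ht => ht⟩

lemma CS.length_eq {α : Type} {d R : ℕ} {f : List α → List α} (h : CS d R f) :
    ∀ (t t' : List α), t.length = t'.length → t.length ≤ d → (f t).length = (f t').length := by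
  intro t
  induction t using List.reverseRecOn with
  | nil => intro t' h1 _; simp at h1; have := List.length_eq_zero_iff.1 h1.symm; subst this; rfl
  | append_singleton t a ih =>
    intro t' h1 h2
    rcases List.eq_nil_or_concat t' with rfl | ⟨s, b, rfl⟩
    · simp at h1
    · simp at h1 h2
      obtain ⟨w, hw⟩ := h.1 t.length (by omega)
      simp only [List.concat_eq_append] 
      rw [hw t rfl, hw s h1.symm]
      simp [ih s h1 (by omega)]

/-- constructor: add a root and a first word -/
lemma CS_cons {α : Type} {d R : ℕ} {f : List α → List α} (h : CS d R f) (c : List α)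
    (w : List (Option α)) (F : List α → List α) (h0 : F [] = c)
    (h1 : ∀ a t, F (a :: t) = c ++ a :: sb w a ++ f t) :
    CS (d + 1) (c.length + 1 + w.length + R) F := by
  refine ⟨fun j hj => ?_, fun t ht => ?_⟩
  · rcases j with _ | j
    · refine ⟨w ++ (f []).map some, fun t ht a => ?_⟩
      have := List.length_eq_zero_iff.1 ht; subst this
      simp [h0, h1]
    · obtain ⟨u, hu⟩ := h.1 j (by omega)
      refine ⟨u, fun t ht a => ?_⟩
      rcases t with _ | ⟨b, t⟩
      · simp at ht
      · simp at ht
        simp [h1, hu t ht]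
  · rcases t with _ | ⟨b, t⟩
    · simp [h0]; omega
    · simp at ht
      have := h.2 t ht
      simp [h1]; omega

/-- a general word in the tree -/
lemma CS.sub {α : Type} {d R : ℕ} {f : List α → List α} (h : CS d R f) :
    ∀ (u : List (Option α)) (i : ℕ), i + u.length ≤ d → ∃ W : List (Option α),
      ∀ s : List α, s.length = i → ∀ a, f (s ++ sb u a) = f s ++ sb W a := by
  intro u
  induction u with
  | nil => intro i _; exact ⟨[], fun s _ a => by simp⟩
  | cons o u ih =>
    intro i hi
    simp at hi
    obtain ⟨W, hW⟩ := ih (i + 1) (by omega)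
    obtain ⟨w, hw⟩ := h.1 i (by omega)
    refine ⟨o :: (w.map (fun x => x.elim o some)) ++ W, fun s hs a => ?_⟩
    have e : s ++ sb (o :: u) a = (s ++ [o.getD a]) ++ sb u a := by simp [sb]
    rw [e, hW _ (by simp [hs]), hw s hs]
    simp only [sb, List.map_append, List.map_cons, List.append_assoc, List.map_map]
    congr 2
    simp only [List.cons_append, List.cons.injEq, true_and]
    congr 1
    funext x
    rcases x with _ | x <;> simp

lemma CS.line {α : Type} {d R : ℕ} {f : List α → List α} (h : CS d R f) 
    (u : List (Option α)) (i : ℕ) (hi : i + 1 + u.length ≤ d) : ∃ W : List (Option α),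
      ∀ s : List α, s.length = i → ∀ a, f (s ++ a :: sb u a) = f s ++ a :: sb W a := by
  obtain ⟨w, hw⟩ := h.1 i (by omega)
  obtain ⟨W, hW⟩ := h.sub u (i + 1) hi
  refine ⟨w ++ W, fun s hs a => ?_⟩
  have e : s ++ a :: sb u a = (s ++ [a]) ++ sb u a := by simp
  rw [e, hW _ (by simp [hs]), hw s hs]
  simp

lemma CS.line_bd {α : Type} [Inhabited α] {d R : ℕ} {f : List α → List α} (h : CS d R f) 
    (c : List α) (u : List (Option α)) (hi : c.length + 1 + u.length ≤ d) :
    ∃ W : List (Option α), (f c).length + 1 + W.length ≤ R ∧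
      ∀ a, f (c ++ a :: sb u a) = f c ++ a :: sb W a := by
  obtain ⟨W, hW⟩ := h.line u c.length hi
  refine ⟨W, ?_, hW c rfl⟩
  have := h.2 (c ++ default :: sb u default) (by simp; omega)
  rw [hW c rfl] at this
  simp at this; omega

lemma CS.comp {α : Type} [Inhabited α] {d e R : ℕ} {f g : List α → List α} (hf : CS d R f)
    (hg : CS e d g) : CS e R (fun t => f (g t)) := by
  refine ⟨fun j hj => ?_, fun t ht => hf.2 _ (hg.2 t ht)⟩
  obtain ⟨w, hw⟩ := hg.1 j hj
  let t0 : List α := List.replicate j default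
  have h0 : t0.length = j := by simp [t0]
  have hb := hg.2 (t0 ++ [default]) (by simp [h0]; omega)
  rw [hw t0 h0] at hb
  simp at hb
  obtain ⟨W, hW⟩ := hf.line w (g t0).length (by omega)
  refine ⟨W, fun t ht a => ?_⟩
  beta_reduce
  rw [hw t ht, hW _ (hg.length_eq _ _ (by omega) (by omega))]

lemma CS.prepend {α : Type} {d R : ℕ} {f : List α → List α} (h : CS d R f) (x : List α) :
    CS d (x.length + R) (fun t => x ++ f t) :=
  ⟨fun j hj => by
    obtain ⟨w, hw⟩ := h.1 j hj
    exact ⟨w, fun t ht a => by simp [hw t ht]⟩, fun t ht => by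
    have := h.2 t ht; simp; omega⟩

lemma CS.congr_map {α γ : Type} {d R : ℕ} {f : List α → List α} (h : CS d R f) (φ : α → γ) :
    ∀ t t' : List α, t.length ≤ d → t.map φ = t'.map φ → (f t).map φ = (f t').map φ := by
  intro t
  induction t using List.reverseRecOn with
  | nil => intro t' _ h1; simp at h1; subst h1; rfl
  | append_singleton t a ih =>
    intro t' h2 h1
    have hl : t'.length = t.length + 1 := by
      have := congrArg List.length h1; simp at this; omega
    rcases List.eq_nil_or_concat t' with rfl | ⟨s, b, rfl⟩
    · simp at hl
    · simp only [List.concat_eq_append] at *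
      simp at hl h2
      obtain ⟨w, hw⟩ := h.1 t.length (by omega)
      rw [hw t rfl, hw s hl]
      simp only [List.map_append, List.map_cons, List.map_nil] at h1 ⊢
      have h3 := List.append_inj h1 (by simp [hl])
      obtain ⟨h4, h5⟩ := h3
      simp at h5
      rw [ih s (by omega) h4, h5]
      congr 2
      simp only [sb, List.map_map]
      apply List.map_congr_left
      intro x _
      rcases x with _ | x <;> simp [h5]

/-- transport along a retract of alphabets -/
lemma CS.retract {K β : Type} {d R : ℕ} {f : List K → List K} (h : CS d R f) (τ : β → K)
    (φ : K → β) (hφ : ∀ b, φ (τ b) = b) : CS d R (fun s : List β => (f (s.map τ)).map φ) := by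
  refine ⟨fun j hj => ?_, fun t ht => by simpa using h.2 (t.map τ) (by simpa using ht)⟩
  obtain ⟨w, hw⟩ := h.1 j hj
  refine ⟨w.map (Option.map φ), fun t ht a => ?_⟩
  simp only [List.map_append, List.map_cons, List.map_nil]
  rw [hw _ (by simpa using ht)]
  simp only [List.map_append, List.map_cons, hφ, sb, List.map_map]
  congr 2
  apply List.map_congr_left
  intro x _
  rcases x with _ | x <;> simp [hφ]

/-- extension to a larger alphabet -/
lemma CS.extend {α β : Type} (ι : α → β) : ∀ {d R : ℕ} {f : List α → List α}, CS d R f → 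
    ∀ [Inhabited α], ∃ F : List β → List β, CS d R F ∧ ∀ t, t.length ≤ d → F (t.map ι) = (f t).map ι := by
  intro d
  induction d with
  | zero => 
    intro R f h _
    refine ⟨fun _ => (f []).map ι, ⟨fun j hj => by omega, fun t _ => by simpa using h.2 [] (by simp)⟩, ?_⟩
    intro t ht
    have : t = [] := by simpa using ht
    subst this; rfl
  | succ d ih =>
    intro R f h _
    obtain ⟨F, hF, hFf⟩ := ih (h.mono (Nat.le_succ d) le_rfl)
    obtain ⟨w, hw⟩ := h.1 d (by omega)
    have hlen : ∀ t : List β, t.length ≤ d → (F t).length = (f (List.replicate t.length default)).length := by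
      intro t ht
      rw [hF.length_eq t ((List.replicate t.length default).map ι) (by simp) ht, hFf _ (by simpa using ht)]
      simp
    refine ⟨fun t => if h : t.length = d + 1 then F t.dropLast ++ (t.getLast (by rintro rfl; simp at h)) :: sb (w.map (Option.map ι)) (t.getLast (by rintro rfl; simp at h)) else F t, ⟨fun j hj => ?_, fun t ht => ?_⟩, ?_⟩
    · rcases Nat.lt_succ_iff_lt_or_eq.1 hj with hj | rfl
      · obtain ⟨u, hu⟩ := hF.1 j hj
        refine ⟨u, fun t ht a => ?_⟩
        beta_reduce
        rw [dif_neg (by simp; omega), dif_neg (by omega)]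
        exact hu t ht a
      · refine ⟨w.map (Option.map ι), fun t ht a => ?_⟩
        beta_reduce
        rw [dif_pos (by simp; omega), dif_neg (by omega)]
        simp
    · by_cases h1 : t.length = d + 1
      · beta_reduce
        rw [dif_pos h1]
        have h2 := h.2 (List.replicate d default ++ [default]) (by simp)
        rw [hw _ (by simp)] at h2
        have h3 := hlen t.dropLast (by simp; omega)
        simp [h1] at h2 h3 ⊢
        omega
      · beta_reduce
        rw [dif_neg h1]
        exact hF.2 t (by omega)
    · intro t ht
      by_cases h1 : t.length = d + 1
      · rcases List.eq_nil_or_concat t with rfl | ⟨s, b, rfl⟩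
        · simp at h1
        · simp only [List.concat_eq_append] at *
          beta_reduce
          rw [dif_pos (by simpa using h1)]
          simp at h1
          rw [hw s h1]
          simp [hFf s h1.le, sb, Function.comp_def]
      · beta_reduce
        rw [dif_neg (by simpa using h1)]
        exact hFf t (by omega)

end DCS


namespace DCS

lemma split_none {α : Type} : ∀ W : List (Option α), none ∈ W →
    ∃ (c : List α) (w : List (Option α)), W = c.map some ++ none :: w := by
  intro W
  induction W with
  | nil => intro h; simp at h
  | cons o W ih =>
    intro h
    rcases o with _ | b
    · exact ⟨[], W, by simp⟩
    · simp at h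
      obtain ⟨c, w, rfl⟩ := ih h
      exact ⟨b :: c, w, by simp⟩

/-- Hales–Jewett in word form -/
lemma HJ (α : Type) [Finite α] (κ : Type) [Finite κ] : ∃ N : ℕ, ∀ C : List α → κ,
    ∃ (c : List α) (w : List (Option α)) (col : κ), c.length + 1 + w.length = N ∧
      ∀ a, C (c ++ a :: sb w a) = col := by
  obtain ⟨ι, _, h⟩ := Combinatorics.Line.exists_mono_in_high_dimension α κ
  let e := Fintype.equivFin ι
  refine ⟨Fintype.card ι, fun C => ?_⟩
  obtain ⟨l, col, hl⟩ := h (fun v => C (List.ofFn (v ∘ e.symm)))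
  obtain ⟨i, hi⟩ := l.proper
  have hn : none ∈ List.ofFn (l.idxFun ∘ e.symm) := by
    rw [List.mem_ofFn]
    exact ⟨e i, by simp [hi]⟩
  obtain ⟨c, w, hW⟩ := split_none _ hn
  refine ⟨c, w, col, ?_, fun a => ?_⟩
  · have := congrArg List.length hW
    simp at this; omega
  · have : sb (List.ofFn (l.idxFun ∘ e.symm)) a = c ++ a :: sb w a := by rw [hW]; simp
    rw [← this, ← hl a]
    simp only [sb, List.map_ofFn]
    congr 2

/-- level-coloring Carlson–Simpson -/
lemma LC (α : Type) [Finite α] [Inhabited α] (d : ℕ) : ∀ (κ : Type) [Finite κ], ∃ R : ℕ,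
    ∀ χ : List α → κ, ∃ f : List α → List α, CS d R f ∧
      ∀ t t' : List α, t.length = t'.length → t.length ≤ d → χ (f t) = χ (f t') := by
  induction d with
  | zero =>
    intro κ _
    refine ⟨0, fun χ => ⟨fun t => t, CS_id 0, fun t t' h1 h2 => ?_⟩⟩
    have h3 : t = [] := by simpa using h2
    subst h3
    have h4 : t' = [] := by simpa using h1.symm
    subst h4; rfl
  | succ d ih =>
    intro κ _
    obtain ⟨N, hN⟩ := HJ α (Fin (d + 1) → κ)
    haveI : Finite {x : List α // x.length = N} := (List.finite_length_eq α N).to_subtype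
    obtain ⟨R, hR⟩ := ih ({x : List α // x.length = N} → κ)
    refine ⟨N + R, fun χ => ?_⟩
    obtain ⟨f, hf, hff⟩ := hR (fun y x => χ (x.1 ++ y))
    obtain ⟨c, w, col, hl, hcol⟩ := hN (fun x j => χ (x ++ f (List.replicate j default)))
    refine ⟨fun t => match t with
      | [] => c
      | a :: t => c ++ a :: sb w a ++ f t, ?_, ?_⟩
    · have := CS_cons hf c w (fun t => match t with
      | [] => c
      | a :: t => c ++ a :: sb w a ++ f t) rfl (fun _ _ => rfl)
      exact this.mono le_rfl (by omega)
    · have key : ∀ a (t : List α), t.length ≤ d → (ht : t.length < d + 1) →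
          χ (c ++ a :: sb w a ++ f t) = col ⟨t.length, ht⟩ := by
        intro a t ht ht'
        rw [← hcol a]
        have := hff t (List.replicate t.length default) (by simp) ht
        exact congrFun this ⟨c ++ a :: sb w a, by simp; omega⟩
      intro t t' h1 h2
      rcases t with _ | ⟨a, t⟩
      · have h4 : t' = [] := by simpa using h1.symm
        subst h4; rfl
      · rcases t' with _ | ⟨b, t'⟩
        · simp at h1
        · simp at h1 h2
          simp only
          rw [key a t h2 (by omega), key b t' (by omega) (by omega)]
          congr 1
          simp [h1]

lemma skip (α : Type) [Inhabited α] : ∀ (q : ℕ) (n : ℕ → ℕ), (∀ i j, i < j → j ≤ q → n i < n j) →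
    ∃ g : List α → List α, CS q (n q) g ∧ ∀ t, t.length ≤ q → (g t).length = n t.length := by
  intro q
  induction q with
  | zero =>
    intro n _
    refine ⟨fun _ => List.replicate (n 0) default, ⟨fun j hj => by omega, fun t _ => by simp⟩, ?_⟩
    intro t ht
    have : t = [] := by simpa using ht
    subst this; simp
  | succ q ih =>
    intro n hn
    obtain ⟨f, hf, hl⟩ := ih (fun i => n (i + 1) - n 0 - 1) (by
      intro i j h1 h2
      have := hn (i + 1) (j + 1) (by omega) (by omega)
      have := hn 0 (i + 1) (by omega) (by omega)
      show n (i + 1) - n 0 - 1 < n (j + 1) - n 0 - 1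
      omega)
    have h0 := hn 0 (q + 1) (by omega) (by omega)
    refine ⟨fun t => match t with
      | [] => List.replicate (n 0) default
      | a :: t => List.replicate (n 0) default ++ a :: sb [] a ++ f t, ?_, ?_⟩
    · have := CS_cons hf (List.replicate (n 0) default) [] (fun t => match t with
      | [] => List.replicate (n 0) default
      | a :: t => List.replicate (n 0) default ++ a :: sb [] a ++ f t) rfl (fun _ _ => rfl)
      refine this.mono le_rfl ?_
      simp; omega
    · intro t ht
      rcases t with _ | ⟨a, t⟩
      · simp
      · simp at ht
        have := hn 0 (t.length + 1) (by omega) (by omega)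
        simp [hl t ht]; omega

/-- monochromatic Carlson–Simpson trees, relational form -/
lemma colorCS (α : Type) [Finite α] [Inhabited α] (κ : Type) [Finite κ] (q : ℕ) : ∃ R : ℕ,
    ∀ P : List α → κ → Prop, (∀ x, x.length ≤ R → ∃ c, P x c) →
      ∃ (f : List α → List α) (c : κ), CS q R f ∧ ∀ t, t.length ≤ q → P (f t) c := by
  classical
  haveI := Fintype.ofFinite κ
  let d := q * Fintype.card κ
  obtain ⟨R, hR⟩ := LC α d κ
  refine ⟨R, fun P hP => ?_⟩
  have hP' : ∀ x, ∃ c, x.length ≤ R → P x c := by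
    intro x
    by_cases h : x.length ≤ R
    · obtain ⟨c, hc⟩ := hP x h; exact ⟨c, fun _ => hc⟩
    · obtain ⟨c, _⟩ := hP [] (by simp); exact ⟨c, fun h' => absurd h' h⟩
  choose χ hχ using hP'
  obtain ⟨f, hf, hff⟩ := hR χ
  obtain ⟨c, -, hc⟩ := Finset.exists_lt_card_fiber_of_mul_lt_card_of_maps_to
    (s := Finset.range (d + 1)) (t := (Finset.univ : Finset κ))
    (f := fun j => χ (f (List.replicate j default))) (n := q) (by simp) (by
      simp [d, mul_comm])
  set S := (Finset.range (d + 1)).filter (fun j => χ (f (List.replicate j default)) = c) with hS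
  obtain ⟨S', hS'1, hS'2⟩ := Finset.exists_subset_card_eq (s := S) (n := q + 1) hc
  let em := S'.orderEmbOfFin hS'2
  have hem : ∀ i, em i ∈ S := fun i => hS'1 (Finset.orderEmbOfFin_mem _ _ _)
  obtain ⟨g, hg, hgl⟩ := skip α q (fun i => if h : i < q + 1 then em ⟨i, h⟩ else 0) (by
    intro i j hij hj
    beta_reduce
    rw [dif_pos (by omega), dif_pos (by omega)]
    exact em.strictMono (by simpa using hij))
  have hbd : ∀ i, em i ≤ d := by
    intro i
    have := hem i
    simp [hS] at this; omega
  have hg' : CS q d g := hg.mono le_rfl (by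
    rw [dif_pos (by omega)]; exact hbd _)
  refine ⟨fun t => f (g t), c, hf.comp hg', fun t ht => ?_⟩
  have h1 : χ (f (g t)) = c := by
    rw [hff (g t) (List.replicate (g t).length default) (by simp) (hg'.2 t ht), hgl t ht]
    rw [dif_pos (by omega)]
    have := hem ⟨t.length, by omega⟩
    simp only [hS, Finset.mem_filter] at this
    exact this.2
  have := hχ (f (g t)) (hf.2 _ (hg'.2 t ht))
  rwa [h1] at this

/-- self-pattern coloring lemma -/
lemma Cplus (β : Type) [Finite β] [Inhabited β] (Z : Type) [Finite Z] (ζ : Z → List β) (L : ℕ)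
    (hL : ∀ z, (ζ z).length ≤ L) (q : ℕ) : ∃ R : ℕ,
    ∀ P : List β → Z → Prop, (∀ x, x.length ≤ R → ∃ z, P x z) →
      ∃ (g : List β → List β) (z : Z), (∀ t, t.length ≤ q → P (g t) z ∧ (g t).length ≤ R) ∧
        CS q (R + L) (fun t => g t ++ ζ z) := by
  rcases isEmpty_or_nonempty Z with hZ | ⟨⟨zd⟩⟩
  · exact ⟨0, fun P hP => by obtain ⟨z, _⟩ := hP [] (by simp); exact hZ.elim z⟩
  haveI : Inhabited Z := ⟨zd⟩
  obtain ⟨R0, hR0⟩ := colorCS (Z × β) Z q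
  let ex : List (Z × β) → List β := fun X => X.flatMap (fun p => ζ p.1 ++ [p.2])
  have hex : ∀ X, (ex X).length ≤ X.length * (L + 1) := by
    intro X
    induction X with
    | nil => simp [ex]
    | cons p X ih =>
      have : ex (p :: X) = ζ p.1 ++ [p.2] ++ ex X := by simp [ex]
      rw [this]
      have := hL p.1
      simp
      nlinarith
  refine ⟨R0 * (L + 1), fun P hP => ?_⟩
  obtain ⟨G, z0, hG, hGP⟩ := hR0 (fun X z => P (ex X) z) (fun X hX => hP _ ((hex X).trans
    (Nat.mul_le_mul_right _ hX)))
  have hb : ∀ t : List β, t.length ≤ q →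
      (ex (G (t.map (fun a => (z0, a))))).length ≤ R0 * (L + 1) := fun t ht =>
    (hex _).trans (Nat.mul_le_mul_right _ (hG.2 _ (by simpa using ht)))
  refine ⟨fun t => ex (G (t.map (fun a => (z0, a)))), z0, fun t ht => ⟨hGP _ (by simpa using ht), 
    hb t ht⟩, fun j hj => ?_, fun t ht => ?_⟩
  · obtain ⟨w, hw⟩ := hG.1 j hj
    refine ⟨w.flatMap (fun o => match o with
      | none => (ζ z0).map some ++ [none]
      | some p => (ζ p.1).map some ++ [some p.2]) ++ (ζ z0).map some, fun t ht a => ?_⟩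
    simp only [List.map_append, List.map_cons, List.map_nil]
    rw [hw _ (by simpa using ht)]
    have h1 : ∀ w : List (Option (Z × β)), ex (sb w (z0, a)) = sb (w.flatMap (fun o => match o with
      | none => (ζ z0).map some ++ [none]
      | some p => (ζ p.1).map some ++ [some p.2])) a := by
      intro w
      induction w with
      | nil => simp [ex]
      | cons o w ih =>
        rcases o with _ | p
        · rw [sb_cons_none]
          have : ex ((z0, a) :: sb w (z0, a)) = ζ z0 ++ [a] ++ ex (sb w (z0, a)) := by simp [ex]
          rw [this, ih]
          simp
        · rw [sb_cons_some]
          have : ex (p :: sb w (z0, a)) = ζ p.1 ++ [p.2] ++ ex (sb w (z0, a)) := by simp [ex]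
          rw [this, ih]
          simp
    have h2 : ∀ X, ex (G (t.map (fun a => (z0, a))) ++ (z0, a) :: X) = 
        ex (G (t.map (fun a => (z0, a)))) ++ ζ z0 ++ a :: ex X := by
      intro X; simp [ex]
    rw [h2, h1]
    simp
  · have := hb t ht
    have := hL z0
    simp; omega

end DCS


namespace DCS

/-- finitely additive probability contents on all subsets -/
structure PC (Ω : Type) where
  m : Set Ω → ℝ
  nonneg : ∀ S, 0 ≤ m S
  add : ∀ S T, Disjoint S T → m (S ∪ T) = m S + m T
  univ : m Set.univ = 1

namespace PC
variable {Ω : Type} (μ : PC Ω)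

lemma empty : μ.m ∅ = 0 := by
  have := μ.add ∅ ∅ (by simp)
  simp at this; exact this

lemma split (S T : Set Ω) : μ.m S = μ.m (S ∩ T) + μ.m (S \ T) := by
  rw [← μ.add _ _ (Set.disjoint_sdiff_inter.symm), Set.inter_union_diff]

lemma mono {S T : Set Ω} (h : S ⊆ T) : μ.m S ≤ μ.m T := by
  have := μ.split T S
  rw [Set.inter_eq_self_of_subset_right h] at this
  have := μ.nonneg (T \ S)
  linarith

lemma le_one (S : Set Ω) : μ.m S ≤ 1 := μ.univ ▸ μ.mono (Set.subset_univ S)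

lemma union_inter (S T : Set Ω) : μ.m (S ∪ T) = μ.m S + μ.m T - μ.m (S ∩ T) := by
  have h1 : S ∪ T = S ∪ (T \ S) := by simp
  have h2 := μ.split T S
  rw [h1, μ.add _ _ Set.disjoint_sdiff_right, Set.inter_comm S T]
  linarith

lemma union_le (S T : Set Ω) : μ.m (S ∪ T) ≤ μ.m S + μ.m T := by
  have := μ.union_inter S T
  have := μ.nonneg (S ∩ T)
  linarith

lemma biUnion_le {ι : Type} (s : Finset ι) (f : ι → Set Ω) :
    μ.m {ω | ∃ i ∈ s, ω ∈ f i} ≤ ∑ i ∈ s, μ.m (f i) := by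
  classical
  induction s using Finset.induction_on with
  | empty => simp [μ.empty]
  | insert a s ha ih =>
    rw [Finset.sum_insert ha]
    have : {ω | ∃ i ∈ insert a s, ω ∈ f i} = f a ∪ {ω | ∃ i ∈ s, ω ∈ f i} := by
      ext ω; simp
    rw [this]
    have := μ.union_le (f a) {ω | ∃ i ∈ s, ω ∈ f i}
    linarith

/-- conditional content -/
noncomputable def cond (U : Set Ω) (hU : 0 < μ.m U) : PC Ω where
  m S := μ.m (S ∩ U) / μ.m U
  nonneg S := div_nonneg (μ.nonneg _) hU.le
  add S T h := by
    rw [Set.union_inter_distrib_right, μ.add _ _ (h.mono Set.inter_subset_left Set.inter_subset_left), add_div]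
  univ := by simp [hU.ne']

end PC

lemma chain (δ : ℝ) (hδ : 0 < δ) : ∃ (n : ℕ) (δ' : ℝ), 0 < δ' ∧ ∀ (Ω : Type) (μ : PC Ω)
    (e : ℕ → Set Ω), (∀ i ≤ n, δ ≤ μ.m (e i)) → ∃ i j, i < j ∧ j ≤ n ∧ δ' ≤ μ.m (e i ∩ e j) := by
  obtain ⟨n, hn⟩ := exists_nat_gt (2 / δ)
  have hn0 : (0 : ℝ) < n := lt_trans (by positivity) hn
  refine ⟨n, 1 / (2 * n ^ 2), by positivity, fun Ω μ e he => ?_⟩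
  by_contra! hcon
  have key : ∀ l ≤ n, l * δ - l * (n * (1 / (2 * (n : ℝ) ^ 2))) ≤ μ.m {ω | ∃ i ∈ Finset.range l, ω ∈ e i} := by
    intro l
    induction l with
    | zero => intro _; simp [μ.empty]
    | succ l ih =>
      intro hl
      have ih := ih (by omega)
      have h1 : {ω | ∃ i ∈ Finset.range (l + 1), ω ∈ e i} = {ω | ∃ i ∈ Finset.range l, ω ∈ e i} ∪ e l := by
        ext ω; simp [Finset.range_add_one, or_comm]
      rw [h1, μ.union_inter]
      have h2 := he l (by omega)
      have h3 : {ω | ∃ i ∈ Finset.range l, ω ∈ e i} ∩ e l = {ω | ∃ i ∈ Finset.range l, ω ∈ e i ∩ e l} := by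
        ext ω
        constructor
        · rintro ⟨⟨i, hi, h⟩, h'⟩
          exact ⟨i, hi, h, h'⟩
        · rintro ⟨i, hi, h, h'⟩
          exact ⟨⟨i, hi, h⟩, h'⟩
      have h4 := μ.biUnion_le (Finset.range l) (fun i => e i ∩ e l)
      rw [← h3] at h4
      have h5 : ∑ i ∈ Finset.range l, μ.m (e i ∩ e l) ≤ ∑ i ∈ Finset.range l, (1 / (2 * (n : ℝ) ^ 2)) := by
        apply Finset.sum_le_sum
        intro i hi
        simp at hi
        exact (hcon i l hi (by omega)).le
      simp only [Finset.sum_const, Finset.card_range, nsmul_eq_mul] at h5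
      have h6 : (l : ℝ) * (1 / (2 * (n : ℝ) ^ 2)) ≤ n * (1 / (2 * (n : ℝ) ^ 2)) := by
        apply mul_le_mul_of_nonneg_right _ (by positivity)
        exact_mod_cast (by omega : l ≤ n)
      push_cast
      linarith
  have h := key n le_rfl
  have h1 := μ.le_one {ω | ∃ i ∈ Finset.range n, ω ∈ e i}
  have h2 : (n : ℝ) * (n * (1 / (2 * (n : ℝ) ^ 2))) = 1 / 2 := by field_simp
  have h3 : 2 < n * δ := by rwa [div_lt_iff₀ hδ] at hn
  linarith

/-- event that a line is contained -/
def Ev {α Ω : Type} (E : List α → Set Ω) (c : List α) (w : List (Option α)) : Set Ω :=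
  {ω | ω ∈ E c ∧ ∀ a, ω ∈ E (c ++ a :: sb w a)}

def Lp (α : Type) (δ : ℝ) : Prop := ∃ R : ℕ, ∀ (Ω : Type) (μ : PC Ω) (E : List α → Set Ω),
  (∀ x, x.length ≤ R → δ ≤ μ.m (E x)) → ∃ (c : List α) (w : List (Option α)),
    c.length + 1 + w.length ≤ R ∧ 0 < μ.m (Ev E c w)

def Lw (α : Type) (δ : ℝ) : Prop := ∃ (R : ℕ) (θ : ℝ), 0 < θ ∧
  ∀ (Ω : Type) (μ : PC Ω) (E : List α → Set Ω),
  (∀ x, x.length ≤ R → δ ≤ μ.m (E x)) → ∃ (c : List α) (w : List (Option α)),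
    c.length + 1 + w.length ≤ R ∧ θ ≤ μ.m (Ev E c w)

/-- event that a tree is contained -/
def Tv {α Ω : Type} (E : List α → Set Ω) (d : ℕ) (f : List α → List α) : Set Ω :=
  {ω | ∀ t, t.length ≤ d → ω ∈ E (f t)}

def Dd (α : Type) (d : ℕ) : Prop := ∀ δ : ℝ, 0 < δ → ∃ (R : ℕ) (θ : ℝ), 0 < θ ∧
  ∀ (Ω : Type) (μ : PC Ω) (E : List α → Set Ω),
  (∀ x, x.length ≤ R → δ ≤ μ.m (E x)) → ∃ f : List α → List α, CS d R f ∧ θ ≤ μ.m (Tv E d f)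

lemma Dd_zero (α : Type) : Dd α 0 := by
  intro δ hδ
  refine ⟨0, δ, hδ, fun Ω μ E hE => ⟨fun t => t, CS_id 0, (hE [] (by simp)).trans (μ.mono ?_)⟩⟩
  intro ω hω t ht
  have : t = [] := by simpa using ht
  subst this; exact hω

lemma Lw_of_Lp (α : Type) [Finite α] (δ : ℝ) (hδ : 0 < δ) (h : Lp α (δ / 2)) : Lw α δ := by
  classical
  obtain ⟨R, hR⟩ := h
  have fin1 : Set.Finite {c : List α | c.length ≤ R} := List.finite_length_le α R
  have fin2 : Set.Finite {c : List (Option α) | c.length ≤ R} := List.finite_length_le _ R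
  let S := fin1.toFinset ×ˢ fin2.toFinset
  refine ⟨R, δ / (2 * (S.card + 1)), by positivity, fun Ω μ E hE => ?_⟩
  by_contra! hcon
  let S' := S.filter (fun p => p.1.length + 1 + p.2.length ≤ R)
  let B : Set Ω := {ω | ∃ p ∈ S', ω ∈ Ev E p.1 p.2}
  have hB : μ.m B ≤ δ / 2 := by
    refine (μ.biUnion_le S' (fun p => Ev E p.1 p.2)).trans ?_
    have h1 : ∑ p ∈ S', μ.m (Ev E p.1 p.2) ≤ ∑ p ∈ S', δ / (2 * (S.card + 1)) := by
      apply Finset.sum_le_sum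
      intro p hp
      exact (hcon p.1 p.2 (Finset.mem_filter.1 hp).2).le
    refine h1.trans ?_
    simp only [Finset.sum_const, nsmul_eq_mul]
    have h2 : (S'.card : ℝ) ≤ S.card := by exact_mod_cast Finset.card_filter_le _ _
    calc (S'.card : ℝ) * (δ / (2 * (S.card + 1))) ≤ (S.card + 1) * (δ / (2 * (S.card + 1))) := by
          apply mul_le_mul_of_nonneg_right _ (by positivity); linarith
      _ = δ / 2 := by field_simp
  obtain ⟨c, w, hl, hpos⟩ := hR Ω μ (fun x => E x \ B) (by
    intro x hx
    have h1 := hE x hx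
    have h2 := μ.split (E x) B
    have h3 := μ.mono (S := E x ∩ B) (T := B) Set.inter_subset_right
    linarith)
  have : Ev (fun x => E x \ B) c w = ∅ := by
    rw [Set.eq_empty_iff_forall_notMem]
    rintro ω ⟨h1, h2⟩
    apply h1.2
    refine ⟨(c, w), ?_, h1.1, fun a => (h2 a).1⟩
    simp [S', S]
    omega
  rw [this, μ.empty] at hpos
  exact lt_irrefl _ hpos

end DCS


namespace DCS

lemma CS.ext_cons {α : Type} [Inhabited α] {d R : ℕ} {f : List α → List α} (h : CS d R f) (x : List α) (a : α)
    (z : List α) (hi : x.length + 1 + z.length ≤ d) : ∃ y : List α, f (x ++ a :: z) = f x ++ a :: y ∧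
      (f x).length + 1 + y.length ≤ R := by
  obtain ⟨W, hb, hW⟩ := h.line_bd x (z.map some) (by simpa using hi)
  refine ⟨sb W a, ?_, by simpa using hb⟩
  have := hW a
  simpa using this

lemma fusion (α : Type) [Finite α] [Inhabited α] (q : ℕ) : ∀ (κ : Type) [Finite κ], ∃ R : ℕ,
    ∀ χ : List α → List α → κ, ∃ f : List α → List α, CS q R f ∧
      ∀ x z z' : List α, x.length + 1 + z.length ≤ q → x.length + 1 + z'.length ≤ q →
        χ (f x) (f (x ++ default :: z)) = χ (f x) (f (x ++ default :: z')) := by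
  induction q with
  | zero =>
    intro κ _
    exact ⟨0, fun χ => ⟨fun t => t, CS_id 0, fun x z z' h => by omega⟩⟩
  | succ q ih =>
    intro κ _
    obtain ⟨Rq, hRq⟩ := ih (α → κ)
    obtain ⟨R', hR'⟩ := colorCS α κ Rq
    refine ⟨R' + 1, fun χ => ?_⟩
    obtain ⟨g, c, hg, hgc⟩ := hR' (fun y c => χ [] (default :: y) = c) (fun y _ => ⟨_, rfl⟩)
    obtain ⟨f, hf, hff⟩ := hRq (fun x y a => χ (a :: g x) (a :: g y))
    refine ⟨fun t => match t with
      | [] => []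
      | a :: t => a :: g (f t), ?_, ?_⟩
    · refine (CS_cons (hg.comp hf) [] [] (fun t => match t with
      | [] => []
      | a :: t => a :: g (f t)) rfl (fun a t => by simp)).mono le_rfl ?_
      simp; omega
    · intro x z z' h1 h2
      rcases x with _ | ⟨a, x⟩
      · simp at h1 h2
        simp only [List.nil_append]
        rw [hgc _ (hf.2 _ (by omega)), hgc _ (hf.2 _ (by omega))]
      · simp at h1 h2
        simp only [List.cons_append]
        exact congrFun (hff x z z' (by omega) (by omega)) a

lemma pairL (α : Type) [Finite α] [Inhabited α] (δ : ℝ) (hδ : 0 < δ) : ∃ δ' : ℝ, 0 < δ' ∧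
    ∀ q : ℕ, ∃ R : ℕ, ∀ (Ω : Type) (μ : PC Ω) (E : List α → Set Ω),
      (∀ x, x.length ≤ R → δ ≤ μ.m (E x)) → ∃ f : List α → List α, CS q R f ∧
        ∀ x z : List α, x.length + 1 + z.length ≤ q →
          δ' ≤ μ.m (E (f x) ∩ E (f (x ++ default :: z))) := by
  obtain ⟨n, δ', hδ', hch⟩ := chain δ hδ
  refine ⟨δ', hδ', fun q => ?_⟩
  obtain ⟨R0, hR0⟩ := colorCS α Prop (max q n)
  obtain ⟨R, hR⟩ := fusion α (R0 + 1) Prop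
  refine ⟨R, fun Ω μ E hE => ?_⟩
  obtain ⟨f1, hf1, hff⟩ := hR (fun x y => δ' ≤ μ.m (E x ∩ E y))
  obtain ⟨g, b, hg, hgb⟩ := hR0 (fun x b => (δ' ≤ μ.m (E (f1 x) ∩ E (f1 (x ++ [default])))) = b)
    (fun x _ => ⟨_, rfl⟩)
  have key : ∀ x z : List α, x.length + 1 + z.length ≤ max q n →
      (δ' ≤ μ.m (E (f1 (g x)) ∩ E (f1 (g (x ++ default :: z))))) = b := by
    intro x z hxz
    obtain ⟨y, hy, hyl⟩ := hg.ext_cons x default z hxz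
    rw [hy, hff (g x) y [] (by omega) (by simp; omega)]
    exact hgb x (by omega)
  have hfg : CS (max q n) R (fun t => f1 (g t)) := (hf1.mono (Nat.le_succ R0) le_rfl).comp hg
  have hb : b := by
    obtain ⟨i, j, hij, hj, h⟩ := hch Ω μ (fun i => E (f1 (g (List.replicate i default))))
      (fun i hi => hE _ (hfg.2 _ (by simp; omega)))
    have e : List.replicate j (default : α) = List.replicate i default ++ default :: List.replicate (j - i - 1) default := by
      rw [← List.replicate_succ, ← List.replicate_add]
      congr 1; omega
    rw [← key (List.replicate i default) (List.replicate (j - i - 1) default) (by simp; omega), ← e]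
    exact h
  refine ⟨fun t => f1 (g t), hfg.mono (le_max_left _ _) le_rfl, fun x z h => ?_⟩
  rw [key x z (h.trans (le_max_left _ _))]
  exact hb

lemma Dd_succ (α : Type) [Finite α] [Inhabited α] (hL : ∀ δ : ℝ, 0 < δ → Lw α δ) (d : ℕ) (hD : Dd α d) :
    Dd α (d + 1) := by
  intro δ hδ
  obtain ⟨δ', hδ', hpair⟩ := pairL α δ hδ
  obtain ⟨R1, θ1, hθ1, hL1⟩ := hL δ' hδ'
  obtain ⟨R2, θ2, hθ2, hD2⟩ := hD θ1 hθ1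
  haveI : Finite {c : List α // c.length ≤ R1} := (List.finite_length_le α R1).to_subtype
  haveI : Finite {c : List (Option α) // c.length ≤ R1} := (List.finite_length_le _ R1).to_subtype
  obtain ⟨R3, hR3⟩ := colorCS α ({c : List α // c.length ≤ R1} × {c : List (Option α) // c.length ≤ R1}) R2
  obtain ⟨R, hR⟩ := hpair (R1 + 1 + R3)
  refine ⟨R, θ2, hθ2, fun Ω μ E hE => ?_⟩
  obtain ⟨f, hf, hff⟩ := hR Ω μ E hE
  let G : List α → List α → Set Ω := fun z x =>
    E (f x) ∩ E (f (x ++ (List.replicate (R1 + 1 - x.length) default ++ z)))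
  obtain ⟨g, ⟨⟨c, hc'⟩, ⟨w, hw'⟩⟩, hg, hgP⟩ := hR3 (fun z p => p.1.1.length + 1 + p.2.1.length ≤ R1 ∧
    θ1 ≤ μ.m (Ev (G z) p.1.1 p.2.1)) (by
      intro z hz
      obtain ⟨c, w, hcw, h⟩ := hL1 Ω μ (G z) (by
        intro x hx
        have : List.replicate (R1 + 1 - x.length) (default : α) ++ z =
          default :: (List.replicate (R1 - x.length) default ++ z) := by
          rw [← List.cons_append, ← List.replicate_succ]
          congr 2; omega
        simp only [G, this]
        apply hff
        simp; omega)
      exact ⟨(⟨c, by omega⟩, ⟨w, by omega⟩), hcw, h⟩)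
  simp only at hgP
  obtain ⟨hcw, -⟩ := hgP [] (by simp)
  obtain ⟨h, hh, hhT⟩ := hD2 Ω μ (fun z => Ev (G (g z)) c w) (fun x hx => (hgP x hx).2)
  let W : List (Option α) := w ++ (List.replicate (R1 + 1 - (c.length + 1 + w.length)) default).map some
  let H : List α → List α := fun t => match t with
    | [] => c
    | a :: t => c ++ a :: sb W a ++ g (h t)
  have hH : CS (d + 1) (R1 + 1 + R3) H := 
    (CS_cons (hg.comp hh) c W H rfl (fun a t => rfl)).mono le_rfl (by
      simp [W]; omega)
  refine ⟨fun t => f (H t), hf.comp hH, hhT.trans (μ.mono ?_)⟩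
  intro ω hω t ht
  rcases t with _ | ⟨a, t⟩
  · exact (hω [] (by simp)).1.1
  · simp at ht
    have := ((hω t ht).2 a).2
    convert this using 2
    have e : (c ++ a :: sb w a).length = c.length + 1 + w.length := by simp; omega
    rw [e]
    simp only [H, W, sb_append, sb_map_some]
    simp

lemma Dd_all (α : Type) [Finite α] [Inhabited α] (hL : ∀ δ : ℝ, 0 < δ → Lw α δ) (d : ℕ) : Dd α d := by
  induction d with
  | zero => exact Dd_zero α
  | succ d ih => exact Dd_succ α hL d ih

end DCS


namespace DCS

def Ins {α Ω : Type} (a : α) (X : List (Option α) → Set Ω) : Prop :=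
  ∀ s s' : List (Option α), s.map (fun o => o.getD a) = s'.map (fun o => o.getD a) → X s = X s'

lemma CS.trunc {α : Type} {d R : ℕ} {f : List α → List α} (h : CS d R f) :
    CS d R (fun t => f (t.take d)) := by
  refine ⟨fun j hj => ?_, fun t ht => h.2 _ (by simp)⟩
  obtain ⟨w, hw⟩ := h.1 j hj
  refine ⟨w, fun t ht a => ?_⟩
  beta_reduce
  rw [List.take_of_length_le (by simp; omega), List.take_of_length_le (by omega)]
  exact hw t ht a

lemma CS.trunc_congr {α γ : Type} {d R : ℕ} {f : List α → List α} (h : CS d R f) (φ : α → γ)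
    (t t' : List α) (ht : t.map φ = t'.map φ) : (f (t.take d)).map φ = (f (t'.take d)).map φ := by
  apply h.congr_map φ _ _ (by simp)
  rw [List.map_take, List.map_take, ht]

lemma Dext (α : Type) [Inhabited α] (hD : ∀ d, Dd α d) (a : α) (d : ℕ) (δ : ℝ) (hδ : 0 < δ) :
    ∃ (R : ℕ) (θ : ℝ), 0 < θ ∧ ∀ (Ω : Type) (μ : PC Ω) (X : List (Option α) → Set Ω), Ins a X →
      (∀ x, x.length ≤ R → δ ≤ μ.m (X x)) → ∃ F : List (Option α) → List (Option α), CS d R F ∧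
        θ ≤ μ.m (Tv X d F) := by
  obtain ⟨R, θ, hθ, h⟩ := hD d δ hδ
  refine ⟨R, θ, hθ, fun Ω μ X hX hm => ?_⟩
  obtain ⟨f, hf, hfm⟩ := h Ω μ (fun x => X (x.map some)) (fun x hx => hm _ (by simpa using hx))
  obtain ⟨F, hF, hFf⟩ := hf.extend (some : α → Option α)
  refine ⟨F, hF, hfm.trans (μ.mono ?_)⟩
  intro ω hω t ht
  have h1 := hω (t.map (fun o => o.getD a)) (by simpa using ht)
  simp only at h1
  rw [← hFf _ (by simpa using ht)] at h1
  rwa [hX (F t) (F ((t.map (fun o => o.getD a)).map some))]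
  apply hF.congr_map _ _ _ ht
  simp

def XJ {α Ω : Type} (J : Finset α) (X : α → Set Ω) : Set Ω := {ω | ∀ b ∈ J, ω ∈ X b}

def TS (α : Type) (J : Finset α) : Prop := ∀ (d : ℕ) (κ0 l : ℝ), 0 < κ0 → 0 ≤ l → ∃ R : ℕ,
  ∀ (Ω : Type) (μ : PC Ω) (E : List (Option α) → Set Ω) (X : α → List (Option α) → Set Ω),
    (∀ b ∈ J, Ins b (X b)) →
    (∀ s, s.length ≤ R → κ0 ≤ μ.m (E s ∩ XJ J (fun b => X b s)) - l * μ.m (XJ J (fun b => X b s))) →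
    ∃ (f : List (Option α) → List (Option α)) (U : Set Ω), CS d R f ∧ 0 < μ.m U ∧
      ∀ t, t.length ≤ d → l * μ.m U ≤ μ.m (E (f t) ∩ U)

lemma TS_empty (α : Type) : TS α ∅ := by
  intro d κ0 l hκ hl
  refine ⟨d, fun Ω μ E X _ h => ⟨fun t => t, Set.univ, CS_id d, by simp [μ.univ], fun t ht => ?_⟩⟩
  have := h t ht
  simp only [XJ, Finset.notMem_empty, false_imp_iff, implies_true, Set.setOf_true] at this
  linarith

lemma exc_step {Ω : Type} (μ : PC Ω) {E A B O : Set Ω} {κ l : ℝ} (hO : O ⊆ A)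
    (h1 : κ ≤ μ.m (E ∩ (A ∩ B)) - l * μ.m (A ∩ B) - κ * μ.m A)
    (h2 : μ.m (E ∩ B ∩ O) - l * μ.m (B ∩ O) < κ * μ.m O) :
    κ ≤ μ.m (E ∩ (A \ O ∩ B)) - l * μ.m (A \ O ∩ B) - κ * μ.m (A \ O) := by
  have e1 := μ.split (E ∩ (A ∩ B)) O
  have e2 := μ.split (A ∩ B) O
  have e3 := μ.split A O
  have f1 : E ∩ (A ∩ B) ∩ O = E ∩ B ∩ O := by
    ext ω; constructor
    · rintro ⟨⟨h, h', h''⟩, k⟩; exact ⟨⟨h, h''⟩, k⟩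
    · rintro ⟨⟨h, h''⟩, k⟩; exact ⟨⟨h, hO k, h''⟩, k⟩
  have f2 : A ∩ B ∩ O = B ∩ O := by
    ext ω; constructor
    · rintro ⟨⟨h', h''⟩, k⟩; exact ⟨h'', k⟩
    · rintro ⟨h'', k⟩; exact ⟨⟨hO k, h''⟩, k⟩
  have f3 : A ∩ O = O := Set.inter_eq_self_of_subset_right hO
  have f4 : (E ∩ (A ∩ B)) \ O = E ∩ (A \ O ∩ B) := by
    ext ω; simp only [Set.mem_inter_iff, Set.mem_diff]; tauto
  have f5 : (A ∩ B) \ O = A \ O ∩ B := by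
    ext ω; simp only [Set.mem_inter_iff, Set.mem_diff]; tauto
  rw [f1, f4] at e1
  rw [f2, f5] at e2
  rw [f3] at e3
  rw [e1, e2, e3] at h1
  linarith

lemma TS_insert (α : Type) [Finite α] [Inhabited α] [DecidableEq α] (hD : ∀ d, Dd α d) (a : α) (J : Finset α)
    (_ha : a ∉ J) (hJ : TS α J) : TS α (insert a J) := by
  intro d κ0 l hκ hl
  obtain ⟨d', hd'⟩ := hJ d (κ0 / 2) l (by positivity) hl
  obtain ⟨M, θ, hθ, hV⟩ := Dext α hD a d' (κ0 / 2) (by positivity)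
  have hXins : ∀ {Ω : Type} (X : α → Set Ω), XJ (insert a J) X = X a ∩ XJ J X := by
    intro Ω X; ext ω; simp [XJ]
  have inner : ∀ n : ℕ, ∃ R : ℕ, ∀ (Ω : Type) (μ : PC Ω) (E : List (Option α) → Set Ω)
      (X : α → List (Option α) → Set Ω), (∀ b ∈ insert a J, Ins b (X b)) →
      (∀ s, s.length ≤ R → κ0 / 2 ≤ μ.m (E s ∩ (X a s ∩ XJ J (fun b => X b s)))
        - l * μ.m (X a s ∩ XJ J (fun b => X b s)) - κ0 / 2 * μ.m (X a s)) →
      (∀ s, s.length ≤ R → μ.m (X a s) ≤ n * θ) →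
      ∃ (f : List (Option α) → List (Option α)) (U : Set Ω), CS d R f ∧ 0 < μ.m U ∧
      ∀ t, t.length ≤ d → l * μ.m U ≤ μ.m (E (f t) ∩ U) := by
    intro n
    induction n with
    | zero =>
      refine ⟨0, fun Ω μ E X _ h1 h2 => ?_⟩
      exfalso
      have h1 := h1 [] (by simp)
      have h2 := h2 [] (by simp)
      have h3 := μ.mono (S := E [] ∩ (X a [] ∩ XJ J (fun b => X b []))) (T := X a [])
        (fun ω h => h.2.1)
      have h4 := μ.nonneg (X a [])
      have h5 := mul_nonneg hl (μ.nonneg (X a [] ∩ XJ J (fun b => X b [])))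
      have h6 := mul_nonneg (by positivity : 0 ≤ κ0 / 2) h4
      simp at h2
      linarith
    | succ n ih =>
      obtain ⟨Rn, hRn⟩ := ih
      haveI : Finite {t : List (Option α) // t.length ≤ d'} := (List.finite_length_le _ d').to_subtype
      haveI : Finite {t : List (Option α) // t.length ≤ M} := (List.finite_length_le _ M).to_subtype
      obtain ⟨N, hN⟩ := Cplus (Option α)
        (({t : List (Option α) // t.length ≤ d'} → {t : List (Option α) // t.length ≤ M}) ×
          {t : List (Option α) // t.length ≤ d'}) (fun z => (z.1 z.2).1) M (fun z => (z.1 z.2).2) Rn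
      refine ⟨N + M, fun Ω μ E X hX h1 h2 => ?_⟩
      have hXa : ∀ s, s.length ≤ N + M → κ0 / 2 ≤ μ.m (X a s) := by
        intro s hs
        have h1 := h1 s hs
        have h3 := μ.mono (S := E s ∩ (X a s ∩ XJ J (fun b => X b s))) (T := X a s)
          (fun ω h => h.2.1)
        have h4 := μ.nonneg (X a s)
        have h5 := mul_nonneg hl (μ.nonneg (X a s ∩ XJ J (fun b => X b s)))
        have h6 := mul_nonneg (by positivity : 0 ≤ κ0 / 2) h4
        linarith
      have hIa : Ins a (X a) := hX a (by simp)
      by_cases hcase : ∃ (x : List (Option α)) (V : List (Option α) → List (Option α)),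
          x.length ≤ N ∧ CS d' M V ∧ θ ≤ μ.m (Tv (fun t => X a (x ++ t)) d' V) ∧
          ∀ t, t.length ≤ d' → κ0 / 2 * μ.m (Tv (fun t => X a (x ++ t)) d' V) ≤
            μ.m (E (x ++ V t) ∩ XJ J (fun b => X b (x ++ V t)) ∩ Tv (fun t => X a (x ++ t)) d' V)
            - l * μ.m (XJ J (fun b => X b (x ++ V t)) ∩ Tv (fun t => X a (x ++ t)) d' V)
      · obtain ⟨x, V, hx, hVcs, hθV, hexc⟩ := hcase
        set O := Tv (fun t => X a (x ++ t)) d' V with hO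
        have hO0 : 0 < μ.m O := lt_of_lt_of_le hθ hθV
        obtain ⟨f, U, hf, hU, hfU⟩ := hd' Ω (μ.cond O hO0) (fun t => E (x ++ V (t.take d')))
          (fun b t => X b (x ++ V (t.take d'))) (by
            intro b hb s s' hss
            apply hX b (by simp [hb])
            rw [List.map_append, List.map_append, hVcs.trunc_congr _ s s' hss]) (by
            intro s hs
            rw [List.take_of_length_le hs]
            have := hexc s hs
            simp only [PC.cond]
            rw [← mul_div_assoc, ← sub_div, le_div_iff₀ hO0]
            exact this)
        refine ⟨fun t => x ++ V ((f t).take d'), U ∩ O, ?_, ?_, ?_⟩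
        · have := (hVcs.trunc.prepend x).comp hf
          exact this.mono le_rfl (by omega)
        · simp only [PC.cond] at hU
          rw [lt_div_iff₀ hO0] at hU
          simpa using hU
        · intro t ht
          have := hfU t ht
          simp only [PC.cond] at this
          rw [← mul_div_assoc, div_le_div_iff_of_pos_right hO0, Set.inter_assoc] at this
          exact this
      · push Not at hcase
        let OM : ({t : List (Option α) // t.length ≤ d'} → {t : List (Option α) // t.length ≤ M}) →
            List (Option α) → Set Ω := fun V x => {ω | ∀ t, ω ∈ X a (x ++ (V t).1)}
        obtain ⟨g, ⟨V, t0⟩, hg, hcs⟩ := hN (fun x z => θ ≤ μ.m (OM z.1 x) ∧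
          μ.m (E (x ++ (z.1 z.2).1) ∩ XJ J (fun b => X b (x ++ (z.1 z.2).1)) ∩ OM z.1 x)
            - l * μ.m (XJ J (fun b => X b (x ++ (z.1 z.2).1)) ∩ OM z.1 x) < κ0 / 2 * μ.m (OM z.1 x)) (by
          intro x hx
          obtain ⟨V, hVcs, hVθ⟩ := hV Ω μ (fun t => X a (x ++ t)) (by
            intro s s' hss
            apply hIa
            simp [hss]) (fun t ht => hXa _ (by simp; omega))
          obtain ⟨t, ht, hlt⟩ := hcase x V hx hVcs hVθ
          have hOM : OM (fun t => ⟨V t.1, hVcs.2 _ t.2⟩) x = Tv (fun t => X a (x ++ t)) d' V := by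
            ext ω; simp [OM, Tv]
          refine ⟨(fun t => ⟨V t.1, hVcs.2 _ t.2⟩, ⟨t, ht⟩), ?_, ?_⟩
          · simp only [hOM]; exact hVθ
          · simp only [hOM]; exact hlt)
        simp only at hg hcs
        let h : List (Option α) → List (Option α) := fun s => g (s.take Rn) ++ (V t0).1
        have hh : CS Rn (N + M) h := hcs.trunc
        have hhc : ∀ b : α, ∀ s s' : List (Option α), s.map (fun o => o.getD b) = s'.map (fun o => o.getD b) →
            (h s).map (fun o => o.getD b) = (h s').map (fun o => o.getD b) := 
          fun b s s' hss => hcs.trunc_congr _ s s' hss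
        have hsub : ∀ s, OM V (g (s.take Rn)) ⊆ X a (h s) := fun s ω hω => hω t0
        obtain ⟨f, U, hf, hU, hfU⟩ := hRn Ω μ (fun s => E (h s))
          (fun b s => if b = a then X a (h s) \ OM V (g (s.take Rn)) else X b (h s)) (by
            intro b hb s s' hss
            by_cases hba : b = a
            · subst hba
              simp only [if_true]
              have h3 := hhc b s s' hss
              rw [hIa _ _ h3]
              congr 1
              simp only [h, List.map_append] at h3
              have h4 := List.append_cancel_right h3
              ext ω
              simp only [OM, Set.mem_setOf_eq]
              apply forall_congr'
              intro t
              rw [hIa (g (s.take Rn) ++ (V t).1) (g (s'.take Rn) ++ (V t).1) (by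
                rw [List.map_append, List.map_append, h4])]
            · simp only [if_neg hba]
              exact hX b hb _ _ (hhc b s s' hss)) (by
            intro s hs
            have hJeq : XJ J (fun b => if b = a then X a (h s) \ OM V (g (s.take Rn)) else X b (h s)) =
                XJ J (fun b => X b (h s)) := by
              ext ω
              simp only [XJ, Set.mem_setOf_eq]
              apply forall₂_congr
              intro b hb
              rw [if_neg (by rintro rfl; exact _ha hb)]
            simp only [if_true, hJeq]
            obtain ⟨⟨h3, h4⟩, h5⟩ := hg (s.take Rn) (by simp)
            have h6 := h1 (h s) (hh.2 s hs)
            change μ.m (E (h s) ∩ XJ J (fun b => X b (h s)) ∩ OM V (g (s.take Rn)))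
              - l * μ.m (XJ J (fun b => X b (h s)) ∩ OM V (g (s.take Rn))) < _ at h4
            exact exc_step μ (hsub s) h6 h4) (by
            intro s hs
            simp only [if_true]
            have h3 := (hg (s.take Rn) (by simp)).1.1
            have h4 := h2 (h s) (hh.2 s hs)
            have h5 := μ.split (X a (h s)) (OM V (g (s.take Rn)))
            rw [Set.inter_eq_self_of_subset_right (hsub s)] at h5
            push_cast at h4
            linarith)
        exact ⟨fun t => h (f t), U, hh.comp hf, hU, hfU⟩
  obtain ⟨n, hn⟩ := exists_nat_gt (1 / θ)
  obtain ⟨R, hR⟩ := inner n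
  refine ⟨R, fun Ω μ E X hX h => hR Ω μ E X hX ?_ ?_⟩
  · intro s hs
    have h1 := h s hs
    rw [hXins (fun b => X b s)] at h1
    have h2 := mul_le_mul_of_nonneg_left (μ.le_one (X a s)) (by positivity : 0 ≤ κ0 / 2)
    linarith
  · intro s hs
    have h2 := μ.le_one (X a s)
    rw [div_lt_iff₀ hθ] at hn
    linarith

lemma TS_all (α : Type) [Finite α] [Inhabited α] (hD : ∀ d, Dd α d) (J : Finset α) : TS α J := by
  classical
  induction J using Finset.induction_on with
  | empty => exact TS_empty α
  | insert a J ha ih => exact TS_insert α hD a J ha ih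

end DCS


namespace DCS

lemma line_transfer {α Ω : Type} [Inhabited α] {d R : ℕ} {f : List α → List α} (hf : CS d R f)
    (E : List α → Set Ω) (c : List α) (w : List (Option α)) (h : c.length + 1 + w.length ≤ d) :
    ∃ (c' : List α) (w' : List (Option α)), c'.length + 1 + w'.length ≤ R ∧
      Ev (fun t => E (f t)) c w = Ev E c' w' := by
  obtain ⟨W, hb, hW⟩ := hf.line_bd c w h
  refine ⟨f c, W, hb, ?_⟩
  ext ω
  simp only [Ev, hW]

lemma pieces {α Ω : Type} [DecidableEq α] (μ : PC Ω) (E : Set Ω) (X : α → Set Ω) (l κ : ℝ)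
    (h : ∀ (J : Finset α) (j : α), j ∉ J → μ.m (E ∩ (XJ J X ∩ (X j)ᶜ)) - l * μ.m (XJ J X ∩ (X j)ᶜ) < κ)
    (J : Finset α) : μ.m E - l ≤ μ.m (E ∩ XJ J X) - l * μ.m (XJ J X) + J.card * κ := by
  induction J using Finset.induction_on with
  | empty => simp [XJ, μ.univ]
  | insert j J hj ih =>
    have h1 := h J j hj
    have h2 := μ.split (E ∩ XJ J X) (X j)
    have h3 := μ.split (XJ J X) (X j)
    have e1 : E ∩ XJ J X ∩ X j = E ∩ XJ (insert j J) X := by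
      ext ω; simp [XJ]; tauto
    have e2 : (E ∩ XJ J X) \ X j = E ∩ (XJ J X ∩ (X j)ᶜ) := by
      ext ω; simp only [Set.mem_inter_iff, Set.mem_diff, Set.mem_compl_iff]; tauto
    have e3 : XJ J X ∩ X j = XJ (insert j J) X := by
      ext ω; simp [XJ]; tauto
    have e4 : XJ J X \ X j = XJ J X ∩ (X j)ᶜ := rfl
    rw [e1, e2] at h2
    rw [e3, e4] at h3
    rw [Finset.card_insert_of_notMem hj]
    rw [h2, h3] at ih
    push_cast
    linarith

/-- endgame: from a tree of events with the piece structure -/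
lemma endgame (α : Type) [Finite α] [Inhabited α] (hD : ∀ d, Dd α d) (κ0 l : ℝ) (hκ : 0 < κ0) (hl : 0 ≤ l)
    (hLp : Lp (Option α) l) : ∃ R4 : ℕ, ∀ (Ω : Type) (μ : PC Ω) (E : List (Option α) → Set Ω)
      (X : α → List (Option α) → Set Ω), (∀ b, Ins b (X b)) →
      (∀ s, s.length ≤ R4 → ∃ (J : Finset α) (j : α), j ∉ J ∧
        κ0 ≤ μ.m (E s ∩ (XJ J (fun b => X b s) ∩ (X j s)ᶜ)) - l * μ.m (XJ J (fun b => X b s) ∩ (X j s)ᶜ)) →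
      ∃ (c : List (Option α)) (w : List (Option (Option α))), c.length + 1 + w.length ≤ R4 ∧
        0 < μ.m (Ev E c w) := by
  classical
  haveI := Fintype.ofFinite α
  obtain ⟨Rs, hRs⟩ := hLp
  have hT : ∀ J : Finset α, ∃ R : ℕ,
    ∀ (Ω : Type) (μ : PC Ω) (E : List (Option α) → Set Ω) (X : α → List (Option α) → Set Ω),
    (∀ b ∈ J, Ins b (X b)) →
    (∀ s, s.length ≤ R → κ0 ≤ μ.m (E s ∩ XJ J (fun b => X b s)) - l * μ.m (XJ J (fun b => X b s))) →
    ∃ (f : List (Option α) → List (Option α)) (U : Set Ω), CS Rs R f ∧ 0 < μ.m U ∧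
      ∀ t, t.length ≤ Rs → l * μ.m U ≤ μ.m (E (f t) ∩ U) := fun J => TS_all α hD J Rs κ0 l hκ hl
  choose RJ hRJ using hT
  let RT := Finset.univ.sup RJ
  obtain ⟨R4, hR4⟩ := colorCS (Option α) (Finset α × α) RT
  refine ⟨R4, fun Ω μ E X hX hp => ?_⟩
  obtain ⟨h, ⟨J, j⟩, hh, hhP⟩ := hR4 (fun s p => p.2 ∉ p.1 ∧
        κ0 ≤ μ.m (E s ∩ (XJ p.1 (fun b => X b s) ∩ (X p.2 s)ᶜ)) - l * μ.m (XJ p.1 (fun b => X b s) ∩ (X p.2 s)ᶜ))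
    (fun s hs => by
      obtain ⟨J, j, h1, h2⟩ := hp s hs
      exact ⟨(J, j), h1, h2⟩)
  simp only at hhP
  have hjJ := (hhP [] (by simp)).1
  have hle : RJ (insert j J) ≤ RT := Finset.le_sup (f := RJ) (Finset.mem_univ _)
  obtain ⟨f, U, hf, hU, hfU⟩ := hRJ (insert j J) Ω μ (fun s => E (h (s.take RT)))
    (fun b s => if b = j then (X j (h (s.take RT)))ᶜ else X b (h (s.take RT))) (by
      intro b _ s s' hss
      have h1 := hh.trunc_congr _ s s' hss
      have h2 := hX b _ _ h1
      by_cases hbj : b = j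
      · subst hbj
        simp only [if_true, h2]
      · simp only [if_neg hbj, h2]) (by
      intro s hs
      have h1 := (hhP (s.take RT) (by simp)).2
      have e : XJ (insert j J) (fun b => if b = j then (X j (h (s.take RT)))ᶜ else X b (h (s.take RT))) =
          XJ J (fun b => X b (h (s.take RT))) ∩ (X j (h (s.take RT)))ᶜ := by
        ext ω
        simp only [XJ, Set.mem_setOf_eq, Finset.mem_insert, forall_eq_or_imp, if_true, Set.mem_inter_iff]
        rw [and_comm]
        apply and_congr_left'
        apply forall₂_congr
        intro b hb
        rw [if_neg (by rintro rfl; exact hjJ hb)]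
      rw [e]
      exact h1)
  have hf' : CS Rs R4 (fun t => h ((f t).take RT)) := hh.trunc.comp (hf.mono le_rfl hle)
  obtain ⟨c, w, hcw, hpos⟩ := hRs Ω (μ.cond U hU) (fun t => E (h ((f t).take RT))) (by
    intro t ht
    simp only [PC.cond]
    rw [le_div_iff₀ hU]
    exact hfU t ht)
  obtain ⟨c', w', hl', he⟩ := line_transfer hf' E c w hcw
  refine ⟨c', w', hl', ?_⟩
  rw [he] at hpos
  simp only [PC.cond] at hpos
  rw [lt_div_iff₀ hU, zero_mul] at hpos
  exact hpos.trans_le (μ.mono Set.inter_subset_left)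

end DCS


namespace DCS

lemma increment (α : Type) [Finite α] [Inhabited α] (hL : ∀ δ : ℝ, 0 < δ → Lw α δ) (δ0 : ℝ) (hδ0 : 0 < δ0) :
    ∃ γ : ℝ, 0 < γ ∧ ∀ δ, δ0 ≤ δ → Lp (Option α) (δ + γ) → Lp (Option α) δ := by
  classical
  haveI := Fintype.ofFinite α
  have hD : ∀ d, Dd α d := Dd_all α hL
  obtain ⟨δ', hδ', hpair⟩ := @pairL (Option α) inferInstance ⟨some default⟩ δ0 hδ0
  obtain ⟨M0, θ, hθ, hLM⟩ := hL δ' hδ'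
  have hn : (0 : ℝ) < Fintype.card α := by exact_mod_cast Fintype.card_pos
  refine ⟨δ0 * θ / 4, by positivity, fun δ hδ hLp => ?_⟩
  set γ := δ0 * θ / 4 with hγ
  set κ0 := δ0 * θ / (4 * Fintype.card α) with hκ0
  have hγ0 : 0 < γ := by positivity
  obtain ⟨R4, hR4⟩ := endgame α hD κ0 (δ + γ) (by positivity) (by linarith) hLp
  haveI : Finite {c : List α // c.length ≤ M0} := (List.finite_length_le α M0).to_subtype
  haveI : Finite {c : List (Option α) // c.length ≤ M0} := (List.finite_length_le _ M0).to_subtype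
  haveI : Inhabited (α ⊕ Fin M0) := ⟨Sum.inl default⟩
  obtain ⟨R3, hR3⟩ := colorCS (α ⊕ Fin M0)
    ({c : List α // c.length ≤ M0} × {c : List (Option α) // c.length ≤ M0}) R4
  obtain ⟨R, hR⟩ := hpair (M0 + 1 + R3)
  refine ⟨R, fun Ω μ E0 hE0 => ?_⟩
  obtain ⟨f, hf, hff⟩ := hR Ω μ E0 (fun x hx => hδ.trans (hE0 x hx))
  suffices hmain : ∃ (c : List (Option α)) (w : List (Option (Option α))),
      c.length + 1 + w.length ≤ M0 + 1 + R3 ∧ 0 < μ.m (Ev (fun t => E0 (f t)) c w) by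
    obtain ⟨c, w, h1, h2⟩ := hmain
    obtain ⟨c', w', h3, h4⟩ := line_transfer hf E0 c w h1
    exact ⟨c', w', h3, h4 ▸ h2⟩
  have hE1 : ∀ x, x.length ≤ M0 + 1 + R3 → δ ≤ μ.m (E0 (f x)) := fun x hx => hE0 _ (hf.2 x hx)
  set E : List (Option α) → Set Ω := fun t => E0 (f t) with hE
  have hEp : ∀ x z : List (Option α), x.length + 1 + z.length ≤ M0 + 1 + R3 →
      δ' ≤ μ.m (E x ∩ E (x ++ some default :: z)) := hff
  have hE1 : ∀ x, x.length ≤ M0 + 1 + R3 → δ ≤ μ.m (E x) := hE1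
  clear_value E
  clear hff hE0 hf hR
  -- the coloring over the mixed alphabet
  let φ : List α → α ⊕ Fin M0 → α := fun t => Sum.elim id (fun i => t.getD i default)
  let G : List (α ⊕ Fin M0) → List α → Set Ω := fun Y t =>
    E (t.map some) ∩ E (t.map some ++ (List.replicate (M0 + 1 - t.length) (some default) ++ (Y.map (φ t)).map some))
  obtain ⟨V, ⟨⟨c, hc'⟩, ⟨w, hw'⟩⟩, hV, hVP⟩ := hR3 (fun Y p => p.1.1.length + 1 + p.2.1.length ≤ M0 ∧
    θ ≤ μ.m (Ev (G Y) p.1.1 p.2.1)) (by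
      intro Y hY
      obtain ⟨c, w, hcw, h⟩ := hLM Ω μ (G Y) (by
        intro x hx
        have : List.replicate (M0 + 1 - x.length) (some default : Option α) ++ (Y.map (φ x)).map some =
          some default :: (List.replicate (M0 - x.length) (some default) ++ (Y.map (φ x)).map some) := by
          rw [← List.cons_append, ← List.replicate_succ]
          congr 2; omega
        simp only [G, this]
        apply hEp
        simp; omega)
      exact ⟨(⟨c, by omega⟩, ⟨w, by omega⟩), hcw, h⟩)
  simp only at hVP
  obtain ⟨hcw, -⟩ := hVP [] (by simp)
  let L0 : List (Option (Option α)) := (c.map some).map some ++ none :: w.map (Option.map some)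
  let rep : List (Option α) := List.replicate (M0 + 1 - (c.length + 1 + w.length)) (some default)
  let Ψ : α ⊕ Fin M0 → Option (Option α) := Sum.elim (fun b => some (some b)) (fun i => L0.getD i (some (some default)))
  let τ : Option α → α ⊕ Fin M0 := fun o => o.elim (Sum.inr ⟨c.length, by omega⟩) Sum.inl
  let VV : List (Option α) → List (α ⊕ Fin M0) := fun s => V ((s.map τ).take R4)
  have hVVl : ∀ s, (VV s).length ≤ R3 := fun s => hV.2 _ (by simp)
  let W : List (Option α) → List (Option (Option α)) := fun s =>
    w.map (Option.map some) ++ rep.map some ++ (VV s).map Ψ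
  let pt : List (Option α) → Option α → List (Option α) := fun s b => c.map some ++ b :: sb (W s) b
  have hpt : ∀ s b, pt s b = c.map some ++ b :: (sb (w.map (Option.map some)) b ++ rep ++
      (VV s).map (fun k => (Ψ k).getD b)) := by
    intro s b
    simp only [pt, W, sb_append, sb_map_some]
    simp [sb, Function.comp_def]
  have hlenW : ∀ s, c.length + 1 + (W s).length ≤ M0 + 1 + R3 := by
    intro s
    have := hVVl s
    simp [W, rep]; omega
  have hΨτ : ∀ b o, (Ψ (τ o)).getD b = o.elim b some := by
    intro b o
    rcases o with _ | o
    · simp [Ψ, τ, L0]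
    · simp [Ψ, τ]
  -- the letter `some a` points
  have hpts : ∀ s a, pt s (some a) = (c ++ a :: sb w a).map some ++ (List.replicate
      (M0 + 1 - (c ++ a :: sb w a).length) (some default) ++ ((VV s).map (φ (c ++ a :: sb w a))).map some) := by
    intro s a
    have e : (c ++ a :: sb w a).length = c.length + 1 + w.length := by simp; omega
    rw [hpt, e]
    have e1 : sb (w.map (Option.map some)) (some a) = (sb w a).map some := by
      simp only [sb, List.map_map]
      congr 1
      funext o
      rcases o with _ | o <;> simp
    have e2 : (fun k => (Ψ k).getD (some a)) = (fun k => some (φ (c ++ a :: sb w a) k)) := by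
      funext k
      rcases k with b | i
      · simp [Ψ, φ]
      · have h1 : (sb L0 (some a)) = (c ++ a :: sb w a).map some := by
          simp only [L0, sb_append, sb_map_some, sb_cons_none, e1]
          simp
        show (L0.getD i (some (some default))).getD (some a) = some ((c ++ a :: sb w a).getD i default)
        have h2 : (L0.getD i (some (some default))).getD (some a) = (sb L0 (some a)).getD i (some default) := by
          have := List.getD_map (l := L0) (d := some (some default)) (n := i.1) (fun o => o.getD (some a))
          exact this.symm
        rw [h2, h1]
        exact List.getD_map (l := c ++ a :: sb w a) (d := default) (n := i.1) some
    rw [e1, e2]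
    simp [rep]
  -- events
  let X : α → List (Option α) → Set Ω := fun a s => E (c.map some) ∩ E (pt s (some a))
  have hXI : ∀ a, Ins a (X a) := by
    intro a s s' hss
    have : pt s (some a) = pt s' (some a) := by
      rw [hpt, hpt]
      congr 3
      apply hV.trunc_congr
      rw [List.map_map, List.map_map]
      have e : ((fun k => (Ψ k).getD (some a)) ∘ τ) = some ∘ (fun o => o.getD a) := by
        funext o
        simp only [Function.comp, hΨτ]
        rcases o with _ | o <;> simp
      rw [e, ← List.map_map, ← List.map_map, hss]
    simp only [X, this]
  have hCSn : CS R4 (M0 + 1 + R3) (fun s => pt s none) := by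
    have h1 := (hV.trunc.retract τ (fun k => (Ψ k).getD none) (by
      intro b; rw [hΨτ]; rcases b with _ | b <;> simp)).prepend
        (c.map some ++ none :: (sb (w.map (Option.map some)) none ++ rep))
    have h2 : (fun s => pt s none) = (fun s : List (Option α) => 
        (c.map some ++ none :: (sb (w.map (Option.map some)) none ++ rep)) ++
        (V ((s.map τ).take R4)).map (fun k => (Ψ k).getD none)) := by
      funext s
      rw [hpt]
      simp [VV]
    rw [h2]
    refine h1.mono le_rfl ?_
    simp [rep]; omega
  by_contra hcon
  have hno : ∀ (c : List (Option α)) (w : List (Option (Option α))), 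
      c.length + 1 + w.length ≤ M0 + 1 + R3 → μ.m (Ev E c w) ≤ 0 := by
    intro c w h
    by_contra h'
    exact hcon ⟨c, w, h, not_le.1 h'⟩
  obtain ⟨c2, w2, hl2, hpos2⟩ := hR4 Ω μ (fun s => E (pt s none)) X hXI (by
    intro s hs
    by_contra hcc
    push Not at hcc
    have h1 := pieces μ (E (pt s none)) (fun b => X b s) (δ + γ) κ0 hcc Finset.univ
    have h2 : E (pt s none) ∩ XJ Finset.univ (fun b => X b s) ⊆ Ev E (c.map some) (W s) := by
      rintro ω ⟨h3, h4⟩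
      refine ⟨(h4 default (Finset.mem_univ _)).1, fun b => ?_⟩
      rcases b with _ | b
      · exact h3
      · exact (h4 b (Finset.mem_univ _)).2
    have h3 := (μ.mono h2).trans (hno _ _ (by simpa using hlenW s))
    have h4 : θ ≤ μ.m (XJ Finset.univ (fun b => X b s)) := by
      refine (hVP ((s.map τ).take R4) (by simp)).2.trans (μ.mono ?_)
      rintro ω ⟨h5, h6⟩ a -
      refine ⟨h5.1, ?_⟩
      rw [hpts]
      exact (h6 a).2
    have h5 : δ ≤ μ.m (E (pt s none)) := hE1 _ (hCSn.2 s hs)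
    have h6 : (Finset.univ : Finset α).card * κ0 = γ := by
      rw [Finset.card_univ, hκ0, hγ]; field_simp
    rw [h6] at h1
    have h7 : δ0 * θ ≤ (δ + γ) * μ.m (XJ Finset.univ (fun b => X b s)) := by
      apply mul_le_mul (by linarith) h4 hθ.le (by linarith)
    have h8 : 4 * γ = δ0 * θ := by rw [hγ]; ring
    linarith)
  obtain ⟨c3, w3, hl3, he3⟩ := line_transfer hCSn E c2 w2 hl2
  rw [he3] at hpos2
  exact absurd (hno c3 w3 hl3) (not_le.2 hpos2)

lemma Lp_mono {α : Type} {δ δ' : ℝ} (h : δ ≤ δ') (hL : Lp α δ) : Lp α δ' := by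
  obtain ⟨R, hR⟩ := hL
  exact ⟨R, fun Ω μ E hE => hR Ω μ E (fun x hx => h.trans (hE x hx))⟩

lemma Lp_option (α : Type) [Finite α] [Inhabited α] (hL : ∀ δ : ℝ, 0 < δ → Lw α δ) (δ0 : ℝ) (hδ0 : 0 < δ0) :
    Lp (Option α) δ0 := by
  obtain ⟨γ, hγ, h⟩ := increment α hL δ0 hδ0
  obtain ⟨n, hn⟩ := exists_nat_gt (1 / γ)
  rw [div_lt_iff₀ hγ] at hn
  have : ∀ j : ℕ, Lp (Option α) (δ0 + j * γ) → Lp (Option α) δ0 := by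
    intro j
    induction j with
    | zero => intro h; simpa using h
    | succ j ih =>
      intro h1
      apply ih
      apply h _ (by have : (0 : ℝ) ≤ j * γ := by positivity
                    linarith)
      push_cast at h1
      convert h1 using 1; ring
  apply this n
  refine ⟨0, fun Ω μ E hE => ?_⟩
  have h1 := hE [] (by simp)
  have h2 := μ.le_one (E [])
  linarith

lemma Lp_single (α : Type) [Finite α] [Inhabited α] [Subsingleton α] (δ : ℝ) (hδ : 0 < δ) : Lp α δ := by
  obtain ⟨n, δ', hδ', h⟩ := chain δ hδ
  refine ⟨n, fun Ω μ E hE => ?_⟩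
  obtain ⟨i, j, hij, hj, hm⟩ := h Ω μ (fun i => E (List.replicate i default)) (fun i hi => hE _ (by simpa using hi))
  refine ⟨List.replicate i default, (List.replicate (j - i - 1) default).map some, by simp; omega, ?_⟩
  refine hδ'.trans_le (hm.trans (μ.mono ?_))
  rintro ω ⟨h1, h2⟩
  refine ⟨h1, fun a => ?_⟩
  rw [sb_map_some, Subsingleton.elim a default]
  have e : List.replicate j (default : α) = List.replicate i default ++ default :: List.replicate (j - i - 1) default := by
    rw [← List.replicate_succ, ← List.replicate_add]
    congr 1; omega
  rw [← e]
  exact h2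

lemma Lp_equiv {α β : Type} (e : α ≃ β) (δ : ℝ) (h : Lp α δ) : Lp β δ := by
  obtain ⟨R, hR⟩ := h
  refine ⟨R, fun Ω μ E hE => ?_⟩
  obtain ⟨c, w, hl, hpos⟩ := hR Ω μ (fun x => E (x.map e)) (fun x hx => hE _ (by simpa using hx))
  refine ⟨c.map e, w.map (Option.map e), by simpa using hl, hpos.trans_le (μ.mono ?_)⟩
  rintro ω ⟨h1, h2⟩
  refine ⟨h1, fun b => ?_⟩
  have h3 := h2 (e.symm b)
  simp only [List.map_append, List.map_cons, Equiv.apply_symm_apply] at h3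
  convert h3 using 4
  simp only [sb, List.map_map]
  congr 1
  funext o
  rcases o with _ | o <;> simp

theorem Lp_all (α : Type) [Finite α] : Nonempty α → ∀ δ : ℝ, 0 < δ → Lp α δ := by
  refine Finite.induction_empty_option (P := fun α => Nonempty α → ∀ δ : ℝ, 0 < δ → Lp α δ) ?_ ?_ ?_ α
  · intro α β e ih hne δ hδ
    exact Lp_equiv e δ (ih (e.nonempty_congr.2 hne) δ hδ)
  · intro h; exact absurd h (by simp)
  · intro α _ ih _ δ hδ
    rcases isEmpty_or_nonempty α with hα | ⟨⟨a⟩⟩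
    · exact Lp_single (Option α) δ hδ
    · haveI : Inhabited α := ⟨a⟩
      exact Lp_option α (fun δ hδ => Lw_of_Lp α δ hδ (ih ⟨a⟩ _ (by positivity))) δ hδ

end DCS


namespace DCS

open Filter Topology

section avg
variable {α : Type} [Fintype α] [Nonempty α]

/-- average over words of length `n` -/
noncomputable def avg : ℕ → (List α → ℝ) → ℝ
  | 0, F => F []
  | n + 1, F => (∑ a : α, avg n (fun y => F (a :: y))) / (Fintype.card α : ℝ)

lemma avg_mono (n : ℕ) : ∀ F G : List α → ℝ, (∀ x, F x ≤ G x) → avg n F ≤ avg n G := by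
  induction n with
  | zero => intro F G h; exact h []
  | succ n ih =>
    intro F G h
    apply div_le_div_of_nonneg_right _ (by positivity)
    exact Finset.sum_le_sum (fun a _ => ih _ _ (fun x => h _))

lemma avg_const (n : ℕ) (c : ℝ) : avg n (fun _ : List α => c) = c := by
  have hc : (Fintype.card α : ℝ) ≠ 0 := by exact_mod_cast Fintype.card_ne_zero
  induction n with
  | zero => rfl
  | succ n ih => simp only [avg, ih]; simp

lemma avg_add (n : ℕ) : ∀ F G : List α → ℝ, avg n (fun x => F x + G x) = avg n F + avg n G := by
  induction n with
  | zero => intro F G; rfl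
  | succ n ih =>
    intro F G
    simp only [avg, ih, Finset.sum_add_distrib, add_div]

lemma avg_smul (n : ℕ) : ∀ (c : ℝ) (F : List α → ℝ), avg n (fun x => c * F x) = c * avg n F := by
  induction n with
  | zero => intro c F; rfl
  | succ n ih =>
    intro c F
    simp only [avg, ih, ← Finset.mul_sum, mul_div_assoc]

lemma avg_pos (n : ℕ) : ∀ F : List α → ℝ, 0 < avg n F → ∃ z, 0 < F z := by
  induction n with
  | zero => intro F h; exact ⟨[], h⟩
  | succ n ih =>
    intro F h
    by_contra! hcon
    have : avg (n + 1) F ≤ 0 := by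
      apply div_nonpos_of_nonpos_of_nonneg _ (by positivity)
      apply Finset.sum_nonpos
      intro a _
      by_contra! h'
      obtain ⟨z, hz⟩ := ih _ h'
      exact absurd (hcon (a :: z)) (not_le.2 hz)
    linarith

/-- density at level `n` -/
noncomputable def DN (n : ℕ) (A : Set (List α)) : ℝ := avg n (A.indicator (fun _ => (1 : ℝ)))

lemma DN_succ (n : ℕ) (A : Set (List α)) :
    DN (n + 1) A = (∑ a : α, DN n {y | a :: y ∈ A}) / (Fintype.card α : ℝ) := rfl

lemma DN_nonneg (n : ℕ) (A : Set (List α)) : 0 ≤ DN n A := by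
  induction n generalizing A with
  | zero => exact Set.indicator_nonneg (fun _ _ => zero_le_one) _
  | succ n ih =>
    rw [DN_succ]
    exact div_nonneg (Finset.sum_nonneg fun a _ => ih _) (by positivity)

lemma DN_le_one (n : ℕ) (A : Set (List α)) : DN n A ≤ 1 := by
  rw [← avg_const (α := α) n 1]
  apply avg_mono
  intro x
  exact Set.indicator_le_self' (fun _ _ => zero_le_one) x

lemma DN_univ (n : ℕ) : DN n (Set.univ : Set (List α)) = 1 := by
  simp only [DN, Set.indicator_univ]
  exact avg_const n 1

lemma DN_union (n : ℕ) (A B : Set (List α)) (h : Disjoint A B) : DN n (A ∪ B) = DN n A + DN n B := by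
  rw [DN, Set.indicator_union_of_disjoint h]
  exact avg_add n _ _

lemma DN_drop (L n : ℕ) (A : Set (List α)) : DN (L + n) {y | y.drop L ∈ A} = DN n A := by
  have hc : (Fintype.card α : ℝ) ≠ 0 := by exact_mod_cast Fintype.card_ne_zero
  induction L with
  | zero => simp
  | succ L ih =>
    rw [show L + 1 + n = (L + n) + 1 by omega, DN_succ]
    simp only [Set.mem_setOf_eq, List.drop_succ_cons]
    rw [ih]
    simp

lemma DN_eq_ncard (n : ℕ) (A : Set (List α)) :
    DN n A = (Set.ncard {x ∈ A | x.length = n} : ℝ) / (Fintype.card α : ℝ) ^ n := by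
  induction n generalizing A with
  | zero =>
    by_cases h : ([] : List α) ∈ A
    · have : {x ∈ A | x.length = 0} = {[]} := by
        ext x; simp only [Set.mem_setOf_eq, List.length_eq_zero_iff, Set.mem_singleton_iff]
        constructor
        · exact fun h => h.2
        · rintro rfl; exact ⟨h, rfl⟩
      rw [this]; simp [DN, avg, h]
    · have : {x ∈ A | x.length = 0} = ∅ := by
        ext x; simp only [Set.mem_setOf_eq, List.length_eq_zero_iff, Set.mem_empty_iff_false, iff_false]
        rintro ⟨h1, rfl⟩; exact h h1
      rw [this]; simp [DN, avg, h]
  | succ n ih =>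
    rw [DN_succ]
    simp only [ih]
    have fin : ∀ (n : ℕ) (A : Set (List α)), Finite {x : List α // x ∈ A ∧ x.length = n} := by
      intro n A
      exact ((List.finite_length_eq α n).subset (fun x hx => hx.2)).to_subtype
    have key : Set.ncard {x ∈ A | x.length = n + 1} = ∑ a : α, Set.ncard {y | a :: y ∈ A ∧ y.length = n} := by
      have hf : ∀ a : α, Finite {y : List α // a :: y ∈ A ∧ y.length = n} := fun a => fin n {y | a :: y ∈ A}
      let e : {x : List α // x ∈ A ∧ x.length = n + 1} ≃ Σ a : α, {y : List α // a :: y ∈ A ∧ y.length = n} :=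
        { toFun := fun x => match x with
            | ⟨[], h⟩ => absurd h.2 (by simp)
            | ⟨a :: y, h⟩ => ⟨a, y, h.1, by simpa using h.2⟩
          invFun := fun p => ⟨p.1 :: p.2.1, p.2.2.1, by simp [p.2.2.2]⟩
          left_inv := by
            rintro ⟨x, h⟩
            rcases x with _ | ⟨a, y⟩
            · exact absurd h.2 (by simp)
            · rfl
          right_inv := by
            rintro ⟨a, y, h⟩; rfl }
      have := Nat.card_congr e
      rw [Nat.card_sigma] at this
      exact this
    rw [key]
    push_cast
    rw [Finset.sum_div, Finset.sum_div]
    apply Finset.sum_congr rfl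
    intro a _
    rw [div_div, pow_succ]
    rfl

/-- limit along an ultrafilter -/
noncomputable def lm (U : Ultrafilter ℕ) (f : ℕ → ℝ) : ℝ := limUnder (U : Filter ℕ) f

lemma lm_spec (U : Ultrafilter ℕ) (f : ℕ → ℝ) (h : ∀ n, 0 ≤ f n ∧ f n ≤ 1) :
    Tendsto f U (𝓝 (lm U f)) := by
  have hc : IsCompact (Set.Icc (0 : ℝ) 1) := isCompact_Icc
  obtain ⟨x, -, hx⟩ := hc.ultrafilter_le_nhds (U.map f) (by
    rw [le_principal_iff]
    exact Filter.mem_map.2 (Filter.univ_mem' (fun n => h n)))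
  exact tendsto_nhds_limUnder ⟨x, hx⟩

lemma lm_eq (U : Ultrafilter ℕ) (f : ℕ → ℝ) (x : ℝ) (h : Tendsto f U (𝓝 x)) : lm U f = x :=
  h.limUnder_eq

/-- content on words given by shifted densities -/
noncomputable def mY (α : Type) [Fintype α] [Nonempty α] (U : Ultrafilter ℕ) (l : ℕ) : PC (List α) where
  m S := lm U (fun n => DN (n - l) S)
  nonneg S := ge_of_tendsto' (lm_spec U _ (fun n => ⟨DN_nonneg _ _, DN_le_one _ _⟩)) (fun n => DN_nonneg _ _)
  add S T h := by
    apply lm_eq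
    simp only [DN_union _ _ _ h]
    exact (lm_spec U _ (fun n => ⟨DN_nonneg _ _, DN_le_one _ _⟩)).add
      (lm_spec U _ (fun n => ⟨DN_nonneg _ _, DN_le_one _ _⟩))
  univ := by
    apply lm_eq
    simp only [DN_univ]
    exact tendsto_const_nhds

lemma mY_tendsto (U : Ultrafilter ℕ) (l : ℕ) (S : Set (List α)) :
    Tendsto (fun n => DN (n - l) S) U (𝓝 ((mY α U l).m S)) :=
  lm_spec U _ (fun n => ⟨DN_nonneg _ _, DN_le_one _ _⟩)

lemma mY_drop (U : Ultrafilter ℕ) (hU : (U : Filter ℕ) ≤ atTop) (l L : ℕ) (S : Set (List α)) :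
    (mY α U l).m {y | y.drop L ∈ S} = (mY α U (l + L)).m S := by
  apply lm_eq
  refine (mY_tendsto U (l + L) S).congr' ?_
  have : ∀ᶠ n in (U : Filter ℕ), l + L ≤ n := hU (eventually_ge_atTop (l + L))
  filter_upwards [this] with n hn
  rw [← DN_drop L (n - (l + L)) S]
  congr 1
  omega

lemma mY_step (U : Ultrafilter ℕ) (hU : (U : Filter ℕ) ≤ atTop) (l : ℕ) (S : Set (List α)) :
    (mY α U l).m S = (∑ a : α, (mY α U (l + 1)).m {y | a :: y ∈ S}) / (Fintype.card α : ℝ) := by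
  apply lm_eq
  have h1 : Tendsto (fun n => (∑ a : α, DN (n - (l + 1)) {y | a :: y ∈ S}) / (Fintype.card α : ℝ)) U
      (𝓝 ((∑ a : α, (mY α U (l + 1)).m {y | a :: y ∈ S}) / (Fintype.card α : ℝ))) := by
    apply Tendsto.div_const
    apply tendsto_finsetSum
    intro a _
    exact mY_tendsto U (l + 1) _
  refine h1.congr' ?_
  have : ∀ᶠ n in (U : Filter ℕ), l + 1 ≤ n := hU (eventually_ge_atTop (l + 1))
  filter_upwards [this] with n hn
  rw [← DN_succ]
  congr 1
  omega

/-- relative density below a word -/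
noncomputable def dA (U : Ultrafilter ℕ) (A : Set (List α)) (u : List α) : ℝ :=
  (mY α U u.length).m {y | u ++ y ∈ A}

lemma dA_avg (U : Ultrafilter ℕ) (hU : (U : Filter ℕ) ≤ atTop) (A : Set (List α)) (h : ℕ) :
    ∀ u : List α, dA U A u = avg h (fun z => dA U A (u ++ z)) := by
  induction h with
  | zero => intro u; simp [avg]
  | succ h ih =>
    intro u
    rw [avg, dA, mY_step U hU]
    congr 1
    apply Finset.sum_congr rfl
    intro a _
    have := ih (u ++ [a])
    simp only [List.append_assoc, List.singleton_append] at this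
    rw [← this, dA]
    simp

end avg

end DCS


namespace DCS

open Filter Topology

section walk
variable {α : Type} [Fintype α] [Nonempty α]

lemma avg_mono_len (n : ℕ) : ∀ F G : List α → ℝ, (∀ x, x.length = n → F x ≤ G x) → avg n F ≤ avg n G := by
  induction n with
  | zero => intro F G h; exact h [] rfl
  | succ n ih =>
    intro F G h
    apply div_le_div_of_nonneg_right _ (by positivity)
    exact Finset.sum_le_sum (fun a _ => ih _ _ (fun x hx => h _ (by simp [hx])))

noncomputable def Av : List ℕ → (List (List α) → ℝ) → ℝ
  | [], F => F []
  | h :: hs, F => avg h (fun z => Av hs (fun zs => F (z :: zs)))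

lemma Av_mono (hs : List ℕ) : ∀ F G : List (List α) → ℝ, (∀ x, F x ≤ G x) → Av hs F ≤ Av hs G := by
  induction hs with
  | nil => intro F G h; exact h []
  | cons h hs ih => intro F G hFG; exact avg_mono _ _ _ (fun z => ih _ _ (fun x => hFG _))

lemma Av_const (hs : List ℕ) (c : ℝ) : Av hs (fun _ : List (List α) => c) = c := by
  induction hs with
  | nil => rfl
  | cons h hs ih => simp only [Av, ih, avg_const]

lemma Av_add (hs : List ℕ) : ∀ F G : List (List α) → ℝ, Av hs (fun x => F x + G x) = Av hs F + Av hs G := by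
  induction hs with
  | nil => intro F G; rfl
  | cons h hs ih => intro F G; simp only [Av, ih, avg_add]

lemma Av_pos (hs : List ℕ) : ∀ F : List (List α) → ℝ, 0 < Av hs F → ∃ z, 0 < F z := by
  induction hs with
  | nil => intro F h; exact ⟨[], h⟩
  | cons h hs ih =>
    intro F hF
    obtain ⟨z, hz⟩ := avg_pos _ _ hF
    obtain ⟨zs, hzs⟩ := ih _ hz
    exact ⟨z :: zs, hzs⟩

/-- product content -/
noncomputable def muT (ν : PC (List α)) (hs : List ℕ) : PC (List (List α) × List α) where
  m S := Av hs (fun zs => ν.m {y | (zs, y) ∈ S})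
  nonneg S := by
    rw [← Av_const (α := α) hs 0]
    exact Av_mono _ _ _ (fun zs => ν.nonneg _)
  add S T h := by
    rw [← Av_add]
    congr 1
    funext zs
    exact ν.add {y | (zs, y) ∈ S} {y | (zs, y) ∈ T}
      (Set.disjoint_left.2 (fun y hy => Set.disjoint_left.1 h hy))
  univ := by
    have : ∀ zs : List (List α), ν.m {y | (zs, y) ∈ (Set.univ : Set (List (List α) × List α))} = 1 := by
      intro zs
      simpa using ν.univ
    simp only [this]
    exact Av_const hs 1

/-- the walk following pattern `p` -/
def ph (p : List (Option α)) : List α → List (List α) → List α → List α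
  | u, zs, [] => u ++ zs.headD []
  | u, zs, a :: x => ph p (u ++ zs.headD [] ++ sb p a) zs.tail x

lemma ph_pre (p : List (Option α)) : ∀ (x : List α) (u : List α) (zs : List (List α)),
    ph p u zs x = u ++ ph p [] zs x := by
  intro x
  induction x with
  | nil => intro u zs; simp [ph]
  | cons a x ih =>
    intro u zs
    rw [ph, ph, ih, ih ([] ++ zs.headD [] ++ sb p a)]
    simp

lemma ph_sb (p : List (Option α)) : ∀ (w : List (Option α)) (zs : List (List α)),
    ∃ W : List (Option α), ∀ a, ph p [] zs (sb w a) = sb W a := by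
  intro w
  induction w with
  | nil => intro zs; exact ⟨(zs.headD []).map some, fun a => by simp [ph]⟩
  | cons o w ih =>
    intro zs
    obtain ⟨W, hW⟩ := ih zs.tail
    rcases o with _ | b
    · refine ⟨(zs.headD []).map some ++ p ++ W, fun a => ?_⟩
      rw [sb_cons_none, ph, ph_pre, hW]
      simp
    · refine ⟨(zs.headD []).map some ++ (sb p b).map some ++ W, fun a => ?_⟩
      rw [sb_cons_some, ph, ph_pre, hW]
      simp

lemma ph_line (p : List (Option α)) (w : List (Option α)) : ∀ (c : List α) (u : List α) (zs : List (List α)),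
    ∃ W : List (Option α), p <+: W ∧ ∀ a, ph p u zs (c ++ a :: sb w a) = ph p u zs c ++ sb W a := by
  intro c
  induction c with
  | nil =>
    intro u zs
    obtain ⟨W, hW⟩ := ph_sb p w zs.tail
    refine ⟨p ++ W, List.prefix_append _ _, fun a => ?_⟩
    rw [List.nil_append, ph, ph, ph_pre, hW]
    simp
  | cons b c ih =>
    intro u zs
    obtain ⟨W, hp, hW⟩ := ih (u ++ zs.headD [] ++ sb p b) zs.tail
    exact ⟨W, hp, fun a => by rw [List.cons_append, ph, hW, ph]⟩

/-- indicator -/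
noncomputable def ind (A : Set (List α)) : List α → ℝ := A.indicator (fun _ => (1 : ℝ))

lemma ind_mem {A : Set (List α)} {x : List α} (h : x ∈ A) : ind A x = 1 := by simp [ind, h]
lemma ind_notMem {A : Set (List α)} {x : List α} (h : x ∉ A) : ind A x = 0 := by simp [ind, h]

noncomputable def VV (U : Ultrafilter ℕ) (A : Set (List α)) (p : List (Option α)) (u : List α) (hs : List ℕ)
    (x : List α) : ℝ := Av hs (fun zs => ind A (ph p u zs x) * dA U A (ph p u zs x))

lemma dA_nonneg (U : Ultrafilter ℕ) (A : Set (List α)) (u : List α) : 0 ≤ dA U A u := (mY α U _).nonneg _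

lemma VV_nonneg (U : Ultrafilter ℕ) (A : Set (List α)) (p : List (Option α)) (u : List α) (hs : List ℕ)
    (x : List α) : 0 ≤ VV U A p u hs x := by
  rw [← Av_const (α := α) hs 0]
  apply Av_mono
  intro zs
  exact mul_nonneg (Set.indicator_nonneg (fun _ _ => zero_le_one) _) (dA_nonneg _ _ _)

lemma VV_nil (U : Ultrafilter ℕ) (A : Set (List α)) (p : List (Option α)) (u : List α) (h : ℕ) (hs : List ℕ) :
    VV U A p u (h :: hs) [] = avg h (fun z => ind A (u ++ z) * dA U A (u ++ z)) := by
  simp only [VV, Av, ph, List.headD_cons, Av_const]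

lemma VV_cons (U : Ultrafilter ℕ) (A : Set (List α)) (p : List (Option α)) (u : List α) (h : ℕ) (hs : List ℕ)
    (a : α) (x : List α) :
    VV U A p u (h :: hs) (a :: x) = avg h (fun z => VV U A p (u ++ z ++ sb p a) hs x) := by
  simp only [VV, Av, ph, List.headD_cons, List.tail_cons]

lemma child (U : Ultrafilter ℕ) (hU : (U : Filter ℕ) ≤ atTop) (A : Set (List α)) (s : ℝ)
    (hs : ∀ u, dA U A u ≤ s) : ∀ (q u : List α),
    s - dA U A (u ++ q) ≤ (Fintype.card α : ℝ) ^ q.length * (s - dA U A u) := by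
  have hc : (0 : ℝ) < Fintype.card α := by exact_mod_cast Fintype.card_pos
  intro q
  induction q with
  | nil => intro u; simp
  | cons a q ih =>
    intro u
    have h1 := ih (u ++ [a])
    have h2 := dA_avg U hU A 1 u
    simp only [avg] at h2
    rw [eq_div_iff hc.ne'] at h2
    have h3 : s - dA U A (u ++ [a]) ≤ ∑ b : α, (s - dA U A (u ++ [b])) :=
      Finset.single_le_sum (f := fun b => s - dA U A (u ++ [b]))
        (fun b _ => sub_nonneg.2 (hs _)) (Finset.mem_univ a)
    rw [Finset.sum_sub_distrib, ← h2] at h3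
    simp only [Finset.sum_const, Finset.card_univ, nsmul_eq_mul] at h3
    simp only [List.append_assoc, List.singleton_append] at h1
    have h4 : (Fintype.card α : ℝ) ^ q.length * (s - dA U A (u ++ [a])) ≤
        (Fintype.card α : ℝ) ^ q.length * (Fintype.card α * s - dA U A u * Fintype.card α) :=
      mul_le_mul_of_nonneg_left h3 (by positivity)
    calc _ ≤ _ := h1
      _ ≤ _ := h4
      _ = _ := by simp only [List.length_cons, pow_succ]; ring

lemma level (U : Ultrafilter ℕ) (A : Set (List α)) (ε : ℝ) (hε : 0 < ε) (l : ℕ) : ∃ h : ℕ, ∀ u : List α,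
    u.length = l → dA U A u - ε ≤ DN h {y | u ++ y ∈ A} := by
  have h1 : ∀ᶠ n in (U : Filter ℕ), ∀ u ∈ {u : List α | u.length = l}, dA U A u - ε ≤ DN (n - l) {y | u ++ y ∈ A} := by
    rw [Filter.eventually_all_finite (List.finite_length_eq α l)]
    intro u hu
    have h2 := mY_tendsto U l {y | u ++ y ∈ A}
    have h3 : dA U A u = (mY α U l).m {y | u ++ y ∈ A} := by rw [dA, hu]
    rw [h3]
    have h4 := h2.eventually (lt_mem_nhds (sub_lt_self _ hε))
    exact h4.mono (fun n h => le_of_lt h)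
  obtain ⟨n, hn⟩ := h1.exists
  exact ⟨n - l, fun u hu => hn u hu⟩

lemma base_bound (U : Ultrafilter ℕ) (hU : (U : Filter ℕ) ≤ atTop) (A : Set (List α)) (s : ℝ)
    (hs : ∀ u, dA U A u ≤ s) (hs0 : 0 ≤ s) (hs1 : s ≤ 1) (u : List α) (h : ℕ) (ε : ℝ) (hε : 0 < ε)
    (hu : s - ε < dA U A u) (hh : dA U A u - ε ≤ DN h {y | u ++ y ∈ A}) :
    s * s - 3 * ε ≤ avg h (fun z => ind A (u ++ z) * dA U A (u ++ z)) := by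
  have h1 : avg h (fun z => s * ind A (u ++ z) + (dA U A (u ++ z) + (-s))) ≤
      avg h (fun z => ind A (u ++ z) * dA U A (u ++ z)) := by
    apply avg_mono
    intro z
    have := hs (u ++ z)
    by_cases hz : u ++ z ∈ A
    · rw [ind_mem hz]; linarith
    · rw [ind_notMem hz]; linarith
  have h2 : avg h (fun z => ind A (u ++ z)) = DN h {y | u ++ y ∈ A} := rfl
  rw [avg_add, avg_smul, avg_add, avg_const, ← dA_avg U hU, h2] at h1
  have h3 : s * (s - 2 * ε) ≤ s * DN h {y | u ++ y ∈ A} := mul_le_mul_of_nonneg_left (by linarith) hs0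
  nlinarith

lemma claimG (U : Ultrafilter ℕ) (hU : (U : Filter ℕ) ≤ atTop) (A : Set (List α)) (s : ℝ)
    (hs : ∀ u, dA U A u ≤ s) (hs0 : 0 ≤ s) (hs1 : s ≤ 1) (p : List (Option α)) (r : ℕ) :
    ∀ η : ℝ, 0 < η → ∃ ε : ℝ, 0 < ε ∧ ∀ l : ℕ, ∃ hs : List ℕ, ∀ u : List α, u.length = l →
      s - ε < dA U A u → ∀ x : List α, x.length ≤ r → s * s - η ≤ VV U A p u hs x := by
  have hc : (0 : ℝ) < Fintype.card α := by exact_mod_cast Fintype.card_pos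
  induction r with
  | zero =>
    intro η hη
    refine ⟨η / 3, by positivity, fun l => ?_⟩
    obtain ⟨h, hh⟩ := level U A (η / 3) (by positivity) l
    refine ⟨[h], fun u hu hd x hx => ?_⟩
    have : x = [] := by simpa using hx
    subst this
    rw [VV_nil]
    have := base_bound U hU A s hs hs0 hs1 u h (η / 3) (by positivity) hd (hh u hu)
    linarith
  | succ r ih =>
    intro η hη
    obtain ⟨ε', hε', hG⟩ := ih (η / 2) (by positivity)
    set ε1 := ε' / (Fintype.card α : ℝ) ^ p.length with hε1
    have hε1p : 0 < ε1 := by positivity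
    refine ⟨min (η / 3) (ε1 * (η / 2)), lt_min (by positivity) (by positivity), fun l => ?_⟩
    obtain ⟨h, hh⟩ := level U A (min (η / 3) (ε1 * (η / 2))) (lt_min (by positivity) (by positivity)) l
    obtain ⟨hs', hhs'⟩ := hG (l + h + p.length)
    refine ⟨h :: hs', fun u hu hd x hx => ?_⟩
    rcases x with _ | ⟨a, x⟩
    · rw [VV_nil]
      have := base_bound U hU A s hs hs0 hs1 u h _ (lt_min (by positivity) (by positivity)) hd (hh u hu)
      have := min_le_left (η / 3) (ε1 * (η / 2))
      linarith
    · rw [VV_cons]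
      have hxr : x.length ≤ r := by simpa using hx
      have hcp : (0 : ℝ) < (Fintype.card α : ℝ) ^ p.length := by positivity
      have h1 : avg h (fun z => (s * s - η / 2 - s / ε1) + (1 / ε1) * dA U A (u ++ z)) ≤
          avg h (fun z => VV U A p (u ++ z ++ sb p a) hs' x) := by
        apply avg_mono_len
        intro z hz
        have hle := hs (u ++ z)
        have e1 : (s * s - η / 2 - s / ε1) + (1 / ε1) * dA U A (u ++ z) =
            s * s - η / 2 - (s - dA U A (u ++ z)) / ε1 := by ring
        rw [e1]
        by_cases hd1 : s - ε1 < dA U A (u ++ z)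
        · have h2 := child U hU A s hs (sb p a) (u ++ z)
          rw [length_sb] at h2
          have h3 : (Fintype.card α : ℝ) ^ p.length * (s - dA U A (u ++ z)) <
              (Fintype.card α : ℝ) ^ p.length * ε1 := mul_lt_mul_of_pos_left (by linarith) hcp
          have h4 : (Fintype.card α : ℝ) ^ p.length * ε1 = ε' := by
            rw [hε1]; field_simp
          have h5 := hhs' (u ++ z ++ sb p a) (by simp [hu, hz, length_sb]; omega) (by linarith) x hxr
          have h6 : 0 ≤ (s - dA U A (u ++ z)) / ε1 := div_nonneg (by linarith) hε1p.le
          linarith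
        · have h6 : 1 ≤ (s - dA U A (u ++ z)) / ε1 := by
            rw [le_div_iff₀ hε1p]; linarith
          have h7 := VV_nonneg U A p (u ++ z ++ sb p a) hs' x
          nlinarith
      refine le_trans ?_ h1
      rw [avg_add, avg_smul, avg_const, ← dA_avg U hU]
      have h8 : (s - dA U A u) / ε1 ≤ η / 2 := by
        rw [div_le_iff₀ hε1p]
        have := min_le_right (η / 3) (ε1 * (η / 2))
        linarith
      have e2 : (s * s - η / 2 - s / ε1) + (1 / ε1) * dA U A u =
            s * s - η / 2 - (s - dA U A u) / ε1 := by ring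
      rw [e2]
      linarith

end walk

end DCS


namespace DCS

open Filter Topology

section main
variable {α : Type} [Fintype α] [Nonempty α]

/-- positive upper density -/
def PosUD (A : Set (List α)) : Prop := ∃ δ : ℝ, 0 < δ ∧ ∃ᶠ n in atTop, δ ≤ DN n A

lemma PosUD_of_mY (U : Ultrafilter ℕ) (hU : (U : Filter ℕ) ≤ atTop) (l : ℕ) (S : Set (List α))
    (h : 0 < (mY α U l).m S) : PosUD S := by
  refine ⟨(mY α U l).m S / 2, by positivity, ?_⟩
  have h1 := (mY_tendsto U l S).eventually (lt_mem_nhds (half_lt_self h))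
  have h2 : ∃ᶠ n in atTop, (mY α U l).m S / 2 < DN (n - l) S := h1.frequently.filter_mono hU
  have h3 := (tendsto_sub_atTop_nat l).frequently (p := fun n => (mY α U l).m S / 2 < DN n S) h2
  exact h3.mono (fun n hn => le_of_lt hn)

lemma E_bound (U : Ultrafilter ℕ) (hU : (U : Filter ℕ) ≤ atTop) (A : Set (List α)) (p : List (Option α))
    (u : List α) (hs : List ℕ) (x : List α) :
    VV U A p u hs x ≤ (muT (mY α U u.length) hs).m {ω | ph p u ω.1 x ∈ A ∧
      ph p u ω.1 x ++ ω.2.drop ((ph p u ω.1 x).length - u.length) ∈ A} := by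
  apply Av_mono
  intro zs
  by_cases hq : ph p u zs x ∈ A
  · rw [ind_mem hq, one_mul]
    have hlen : u.length + ((ph p u zs x).length - u.length) = (ph p u zs x).length := by
      rw [ph_pre]; simp
    have h1 := mY_drop U hU u.length ((ph p u zs x).length - u.length) {y | ph p u zs x ++ y ∈ A}
    rw [hlen] at h1
    rw [dA, ← h1]
    apply PC.mono
    intro y hy
    exact ⟨hq, hy⟩
  · rw [ind_notMem hq, zero_mul]
    exact PC.nonneg _ _

lemma step (A : Set (List α)) (hA : PosUD A) (p : List (Option α)) :
    ∃ c ∈ A, ∃ w : List (Option α), p <+: w ∧ PosUD {y | ∀ a, c ++ sb w a ++ y ∈ A} := by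
  obtain ⟨δ, hδ, hf⟩ := hA
  haveI : NeBot (atTop ⊓ 𝓟 {n : ℕ | δ ≤ DN n A}) := by
    rw [Filter.frequently_iff_neBot] at hf; exact hf
  set U : Ultrafilter ℕ := Ultrafilter.of (atTop ⊓ 𝓟 {n : ℕ | δ ≤ DN n A}) with hUdef
  have hU0 : (U : Filter ℕ) ≤ atTop ⊓ 𝓟 {n : ℕ | δ ≤ DN n A} := Ultrafilter.of_le _
  have hU : (U : Filter ℕ) ≤ atTop := hU0.trans inf_le_left
  have hev : ∀ᶠ n in (U : Filter ℕ), δ ≤ DN n A := by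
    have : {n : ℕ | δ ≤ DN n A} ∈ (U : Filter ℕ) := (hU0.trans inf_le_right) (mem_principal_self _)
    exact this
  have hd0 : δ ≤ dA U A [] := by
    have h1 := mY_tendsto (α := α) U 0 A
    exact ge_of_tendsto h1 hev
  have hle1 : ∀ u, dA U A u ≤ 1 := fun u => PC.le_one _ _
  have hbdd : BddAbove (Set.range (dA U A)) := ⟨1, by rintro _ ⟨u, rfl⟩; exact hle1 u⟩
  set s := sSup (Set.range (dA U A)) with hsdef
  have hs : ∀ u, dA U A u ≤ s := fun u => le_csSup hbdd ⟨u, rfl⟩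
  have hs1 : s ≤ 1 := csSup_le (Set.range_nonempty _) (by rintro _ ⟨u, rfl⟩; exact hle1 u)
  have hs0 : 0 < s := hδ.trans_le (hd0.trans (hs []))
  have hss : 0 < s * s / 2 := by positivity
  obtain ⟨R, hR⟩ := Lp_all α inferInstance (s * s / 2) hss
  obtain ⟨ε, hε, hG⟩ := claimG U hU A s hs hs0.le hs1 p R (s * s / 2) hss
  obtain ⟨_, ⟨u, rfl⟩, hu⟩ := exists_lt_of_lt_csSup (Set.range_nonempty (dA U A)) (sub_lt_self s hε)
  obtain ⟨hs', hhs'⟩ := hG u.length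
  obtain ⟨c, w, -, hpos⟩ := hR _ (muT (mY α U u.length) hs') (fun x => {ω | ph p u ω.1 x ∈ A ∧
      ph p u ω.1 x ++ ω.2.drop ((ph p u ω.1 x).length - u.length) ∈ A}) (fun x hx => by
        have h1 := hhs' u rfl hu x hx
        have h2 := E_bound U hU A p u hs' x
        linarith)
  obtain ⟨zs, hzs⟩ := Av_pos _ _ hpos
  obtain ⟨W, hpW, hW⟩ := ph_line p w c u zs
  have hcA : ph p u zs c ∈ A := by
    by_contra hcon
    have : {y | (zs, y) ∈ Ev (fun x => {ω : List (List α) × List α | ph p u ω.1 x ∈ A ∧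
      ph p u ω.1 x ++ ω.2.drop ((ph p u ω.1 x).length - u.length) ∈ A}) c w} = ∅ := by
      rw [Set.eq_empty_iff_forall_notMem]
      intro y hy
      exact hcon hy.1.1
    rw [this, PC.empty] at hzs
    exact lt_irrefl _ hzs
  refine ⟨ph p u zs c, hcA, W, hpW, ?_⟩
  apply PosUD_of_mY U hU (u.length + ((ph p u zs c).length + W.length - u.length))
  rw [← mY_drop U hU]
  refine hzs.trans_le (PC.mono _ ?_)
  intro y hy a
  have h1 := (hy.2 a).2
  rw [hW, List.length_append, length_sb] at h1
  exact h1

/-- the iterated sequence of sets -/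
noncomputable def seqA (p : ℕ → List (Option α)) (A : {A : Set (List α) // PosUD A}) :
    ℕ → {A : Set (List α) // PosUD A}
  | 0 => A
  | n + 1 => ⟨_, (step (seqA p A n).1 (seqA p A n).2 (p n)).choose_spec.2.choose_spec.2⟩

lemma infinite_step (p : ℕ → List (Option α)) (A : Set (List α)) (hA : PosUD A) :
    ∃ (B : ℕ → Set (List α)) (c : ℕ → List α) (w : ℕ → List (Option α)), B 0 = A ∧
      ∀ n, c n ∈ B n ∧ p n <+: w n ∧ B (n + 1) = {y | ∀ a, c n ++ sb (w n) a ++ y ∈ B n} := by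
  refine ⟨fun n => (seqA p ⟨A, hA⟩ n).1,
    fun n => (step (seqA p ⟨A, hA⟩ n).1 (seqA p ⟨A, hA⟩ n).2 (p n)).choose,
    fun n => (step (seqA p ⟨A, hA⟩ n).1 (seqA p ⟨A, hA⟩ n).2 (p n)).choose_spec.2.choose, rfl, fun n => ?_⟩
  exact ⟨(step (seqA p ⟨A, hA⟩ n).1 (seqA p ⟨A, hA⟩ n).2 (p n)).choose_spec.1,
    (step (seqA p ⟨A, hA⟩ n).1 (seqA p ⟨A, hA⟩ n).2 (p n)).choose_spec.2.choose_spec.1, rfl⟩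

lemma final (p : ℕ → List (Option α)) (A : Set (List α)) (hA : PosUD A) :
    ∃ (c : List α) (w : ℕ → List (Option α)), (∀ n, p n <+: w n) ∧ ∀ (n : ℕ) (a : ℕ → α),
      c ++ ((List.range n).map fun i => sb (w i) (a i)).flatten ∈ A := by
  obtain ⟨B, c, w, hB0, hB⟩ := infinite_step p A hA
  refine ⟨c 0, fun n => w n ++ (c (n + 1)).map some, fun n => (hB n).2.1.trans (List.prefix_append _ _), ?_⟩
  intro n a
  have key : ∃ r, c 0 ++ ((List.range n).map fun i => sb (w i ++ (c (i + 1)).map some) (a i)).flatten =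
      r ++ c n ∧ ∀ y ∈ B n, r ++ y ∈ A := by
    induction n with
    | zero => exact ⟨[], by simp, fun y hy => by rw [hB0] at hy; exact hy⟩
    | succ n ih =>
      obtain ⟨r, h1, h2⟩ := ih
      refine ⟨r ++ c n ++ sb (w n) (a n), ?_, fun y hy => ?_⟩
      · rw [List.range_succ, List.map_append, List.flatten_append, ← List.append_assoc, h1]
        simp
      · rw [(hB n).2.2] at hy
        have := h2 _ (hy (a n))
        simpa using this
  obtain ⟨r, h1, h2⟩ := key
  rw [h1]
  exact h2 _ (hB n).1

end main

end DCS

/-- **Theorem C**: the density Carlson–Simpson theorem for variable words of a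
prescribed pattern `(pₙ)`; `(wₙ)` is of pattern `(pₙ)` means `pₙ` is an initial
segment (`<+:`) of `wₙ` for every `n`. -/
theorem density_carlson_simpson_pattern (k : ℕ) (hk : 2 ≤ k)
    (p : ℕ → VWord k) (hp : ∀ n, IsVar (p n))
    (A : Set (Word k)) (hA : 0 < Filter.atTop.limsup (fun n : ℕ => dens k n A)) :
    ∃ (c : Word k) (w : ℕ → VWord k),
      (∀ n : ℕ, IsVar (w n) ∧ p n <+: w n) ∧ csSetInf c w ⊆ A := by
  haveI : Nonempty (Fin k) := ⟨⟨0, by omega⟩⟩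
  have hdens : ∀ n, dens k n A = DCS.DN n A := fun n => by
    rw [DCS.DN_eq_ncard, Fintype.card_fin, dens]
  have hpos : DCS.PosUD A := by
    refine ⟨Filter.atTop.limsup (fun n : ℕ => dens k n A) / 2, by positivity, ?_⟩
    have hco : Filter.IsCoboundedUnder (· ≤ ·) Filter.atTop (fun n : ℕ => dens k n A) := by
      apply Filter.IsBoundedUnder.isCoboundedUnder_le
      exact Filter.isBoundedUnder_of ⟨0, fun n => by rw [hdens]; exact DCS.DN_nonneg n A⟩
    have h1 := Filter.frequently_lt_of_lt_limsup hco (half_lt_self hA)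
    exact h1.mono (fun n hn => by rw [← hdens]; exact hn.le)
  obtain ⟨c, w, hw, hc⟩ := DCS.final p A hpos
  refine ⟨c, w, fun n => ⟨(hw n).subset (hp n), hw n⟩, ?_⟩
  rintro x (rfl | ⟨n, a, rfl⟩)
  · simpa using hc 0 (fun _ => ⟨0, by omega⟩)
  · exact hc (n + 1) a
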